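/- arXiv:1901.09349 — 3 statements merged into one kernel-verified Lean document; each statement's English description precedes it below -/
import Mathlib

section
/- There is a universal constant c > 0 such that the following holds. Let G = (V,E) be a graph with |V| = n (n ≥ 2) and maximum vertex degree at most d, let 0 < α < 1, and let M be a (possibly partial) matching over the vertices of G, i.e., a set of pairs of distinct vertices such that each vertex appears in at most one pair. Then either (i) there exists a collection {Q(u,v) : (u,v) ∈ M} of paths in G such that for each (u,v) ∈ M the path Q(u,v) connects u to v, every path has length at most c·d·log₂ n/α, and every vertex of G lies on at most c·d·log₂ n/α of these paths, or (ii) there exists a cut (S,S') in G of sparsity less than α. -/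
/-- Number of ordered pairs `(a,b)` with `a ∈ A`, `b ∈ B`, `a` adjacent to `b` in `G`.
For a partition `(A, Aᶜ)` this is exactly the number of edges crossing the cut. -/
noncomputable def cutCard {V : Type*} (G : SimpleGraph V) (A B : Set V) : ℕ :=
  Nat.card {p : V × V // p.1 ∈ A ∧ p.2 ∈ B ∧ G.Adj p.1 p.2}

/-- `G` is an `α`-expander: every cut `(A, Aᶜ)` into two non-empty parts has at least
`α · min(|A|,|Aᶜ|)` crossing edges. -/
def IsExpander {V : Type*} (G : SimpleGraph V) (α : ℝ) : Prop :=
  ∀ A : Set V, A.Nonempty → Aᶜ.Nonempty →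
    α * (min (Nat.card ↥A) (Nat.card ↥(Aᶜ)) : ℝ) ≤ (cutCard G A Aᶜ : ℝ)

/-- Maximum vertex degree of `G` is at most `d`. -/
def DegLE {V : Type*} (G : SimpleGraph V) (d : ℕ) : Prop :=
  ∀ v : V, Nat.card ↥{w : V | G.Adj v w} ≤ d

/-- `H` is a minor of `G`: there are pairwise-disjoint branch sets, each inducing a
connected subgraph of `G`, with an edge of `G` between the branch sets of every
pair of adjacent vertices of `H`. -/
def IsMinor {W V : Type*} (H : SimpleGraph W) (G : SimpleGraph V) : Prop :=
  ∃ φ : W → Set V,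
    (∀ u, (G.induce (φ u)).Connected) ∧
    (∀ u v, u ≠ v → Disjoint (φ u) (φ v)) ∧
    (∀ u v, H.Adj u v → ∃ a ∈ φ u, ∃ b ∈ φ v, G.Adj a b)

/-- The size of a graph: number of vertices plus number of edges. -/
noncomputable def gsize {V : Type*} (G : SimpleGraph V) : ℕ := Nat.card V + Nat.card G.edgeSet

/-!
If `G` has no cut of sparsity less than `α`, it is a `κ`-vertex expander for `κ = α / d`. Choose
the routing of `M` that minimises `∑ v, 2 ^ load v` among all families of short paths. With the
weights `w v = 2 ^ load v`, its optimality gives `∑ v, load v * w v ≤ 2 * ∑ i, ∑ v ∈ P i, w v` for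
every family `P` of short paths with the same ends. If for every weight `w` some family of short
paths makes this double sum at most `c * ∑ v, w v` with `c` of order `log n / κ`, then the average
load for the weights `2 ^ load` is at most `2 * c`, so every load is at most `4 * c + log n`.

Given a weight `w`, such paths arise by joining the two ends of each pair to a common hub. Let
fire spread from a set `A` of at least `n / 3` vertices, each vertex `v` taking time `w v` to
burn, in rounds that last for the median time left on the fire front. In each round half of the
front burns out, so the unburnt part shrinks by a factor `1 - κ / 4`; and half of the front burns
throughout the round, so the burnout times add up to at most `4 / κ * ∑ v, w v`. The number of
rounds bounds the lengths of the walks and the burnout times bound their weights. The hub is found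
by halving: starting from the vertices of at most three times the average weight, half of the
current set of sources reaches half of the vertices reached so far, and a short fire from those
reaches two thirds of all vertices again. After `log n` halvings one source is left, and a last
fire spreads to all of `V`.
-/

namespace MatchingRouting

open Finset

/-! ### Counting -/

theorem exists_median {α β : Type*} [LinearOrder β] {s : Finset α} (hs : s.Nonempty)
    (f : α → β) :
    ∃ m ∈ s, #s ≤ 2 * #{a ∈ s | f a ≤ f m} ∧ #s ≤ 2 * #{a ∈ s | f m ≤ f a} := by
  let upper : Finset α := {a ∈ s | #s ≤ 2 * #{b ∈ s | f b ≤ f a}}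
  have hupper : upper.Nonempty := by
    obtain ⟨a, ha, hmax⟩ := s.exists_max_image f hs
    refine ⟨a, mem_filter.2 ⟨ha, ?_⟩⟩
    rw [filter_true_of_mem hmax]
    omega
  obtain ⟨m, hm, hmin⟩ := upper.exists_min_image f hupper
  obtain ⟨hms, hle⟩ := mem_filter.1 hm
  refine ⟨m, hms, hle, ?_⟩
  have hbelow : 2 * #{a ∈ s | f a < f m} ≤ #s := by
    rcases eq_empty_or_nonempty {a ∈ s | f a < f m} with hempty | hne
    · simp [hempty]
    obtain ⟨k, hk, hkmax⟩ := exists_max_image _ f hne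
    obtain ⟨hks, hkm⟩ := mem_filter.1 hk
    have hsub : #{a ∈ s | f a < f m} ≤ #{a ∈ s | f a ≤ f k} :=
      card_le_card fun a ha => mem_filter.2 ⟨(mem_filter.1 ha).1, hkmax a ha⟩
    have hkupper : k ∉ upper := fun h => (hmin k h).not_gt hkm
    have hsub' : #{a ∈ s | f a ≤ f k} ≤ #{a ∈ s | f a < f m} :=
      card_le_card fun a ha =>
        mem_filter.2 ⟨(mem_filter.1 ha).1, (mem_filter.1 ha).2.trans_lt hkm⟩
    have : ¬ #s ≤ 2 * #{a ∈ s | f a ≤ f k} := fun h => hkupper (mem_filter.2 ⟨hks, h⟩)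
    omega
  have hsplit := card_filter_add_card_filter_not (s := s) (fun a => f a < f m)
  simp only [not_lt] at hsplit
  omega

theorem exists_subset_reaching_half {α β : Type*} {r : α → β → Prop} {s : Finset α} {t : Finset β}
    {k : ℕ} (hs : #s ≤ 2 * k) (hst : ∀ b ∈ t, ∃ a ∈ s, r a b) :
    ∃ s' ⊆ s, #s' ≤ k ∧ ∃ t' ⊆ t, #t ≤ 2 * #t' ∧ ∀ b ∈ t', ∃ a ∈ s', r a b := by
  classical
  let reached (s' : Finset α) : Finset β := {b ∈ t | ∃ a ∈ s', r a b}
  suffices h : ∃ s' ⊆ s, #s' ≤ k ∧ #t ≤ 2 * #(reached s') by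
    obtain ⟨s', hs', hk, ht⟩ := h
    exact ⟨s', hs', hk, reached s', filter_subset _ _, ht, fun b hb => (mem_filter.1 hb).2⟩
  obtain ⟨s₁, hs₁, hcard₁⟩ := exists_subset_card_eq (Nat.min_le_left #s k)
  have hcard₂ : #(s \ s₁) ≤ k := by
    rw [card_sdiff_of_subset hs₁, hcard₁]
    omega
  have hcover : t ⊆ reached s₁ ∪ reached (s \ s₁) := fun b hb => by
    obtain ⟨a, ha, hab⟩ := hst b hb
    by_cases ha₁ : a ∈ s₁
    · exact mem_union_left _ (mem_filter.2 ⟨hb, a, ha₁, hab⟩)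
    · exact mem_union_right _ (mem_filter.2 ⟨hb, a, mem_sdiff.2 ⟨ha, ha₁⟩, hab⟩)
  have hcard := (card_le_card hcover).trans (card_union_le _ _)
  rcases le_total #(reached (s \ s₁)) #(reached s₁) with hle | hle
  · exact ⟨s₁, hs₁, by omega, by omega⟩
  · exact ⟨s \ s₁, sdiff_subset, hcard₂, by omega⟩

theorem mul_card_filter_lt_le_card {α : Type*} [Fintype α] [Nonempty α] {f : α → ℝ}
    (hf : ∀ a, 0 ≤ f a) {S : ℝ} (hS : 0 < S) (hfS : ∑ a, f a ≤ S) (K : ℝ) :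
    K * #{a | K * S / Fintype.card α < f a} ≤ Fintype.card α := by
  have hmarkov : #{a | K * S / Fintype.card α < f a} * (K * S / Fintype.card α) ≤ S := by
    rw [← nsmul_eq_mul]
    calc _ ≤ ∑ a with K * S / Fintype.card α < f a, f a :=
          card_nsmul_le_sum _ _ _ fun a ha => (mem_filter.1 ha).2.le
      _ ≤ ∑ a, f a := sum_le_univ_sum_of_nonneg hf
      _ ≤ S := hfS
  rw [← mul_div_assoc, div_le_iff₀ (by positivity)] at hmarkov
  exact le_of_mul_le_mul_right (by linarith) hS

theorem sum_endpoints_le {ι V : Type*} [Fintype ι] [Fintype V] {s t : ι → V}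
    (hst : Function.Injective (Sum.elim s t)) {f : V → ℝ} (hf : ∀ v, 0 ≤ f v) :
    ∑ i, (f (s i) + f (t i)) ≤ ∑ v, f v := by
  classical
  calc ∑ i, (f (s i) + f (t i)) = ∑ j, f (Sum.elim s t j) := by
        simp [Fintype.sum_sum_type, sum_add_distrib]
    _ = ∑ v ∈ univ.image (Sum.elim s t), f v := (sum_image hst.injOn).symm
    _ ≤ ∑ v, f v := sum_le_univ_sum_of_nonneg hf

/-! ### Walks with bounded length and weight -/

section WithinBudget

variable {V : Type*} {G : SimpleGraph V} {w : V → ℝ} {u v x : V} {h h' : ℕ} {r r' : ℝ}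

/-- Some walk from `u` to `v` has at most `h` edges and total vertex weight at most `r`. The weight
of the starting vertex `u` is not counted, so that budgets add up under concatenation. -/
def WithinBudget (G : SimpleGraph V) (w : V → ℝ) (h : ℕ) (r : ℝ) (u v : V) : Prop :=
  ∃ p : G.Walk u v, p.length ≤ h ∧ (p.support.tail.map w).sum ≤ r

namespace WithinBudget

theorem refl (G : SimpleGraph V) (w : V → ℝ) (v : V) : WithinBudget G w 0 0 v v :=
  ⟨.nil, by simp⟩

theorem of_adj (huv : G.Adj u v) : WithinBudget G w 1 (w v) u v :=
  ⟨huv.toWalk, by simp⟩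

theorem mono (huv : WithinBudget G w h r u v) (hh : h ≤ h') (hr : r ≤ r') :
    WithinBudget G w h' r' u v := by
  obtain ⟨p, hlen, hwt⟩ := huv
  exact ⟨p, hlen.trans hh, hwt.trans hr⟩

theorem trans (hxu : WithinBudget G w h r x u) (huv : WithinBudget G w h' r' u v) :
    WithinBudget G w (h + h') (r + r') x v := by
  obtain ⟨p, hplen, hpwt⟩ := hxu
  obtain ⟨q, hqlen, hqwt⟩ := huv
  refine ⟨p.append q, by simpa using add_le_add hplen hqlen, ?_⟩
  rw [SimpleGraph.Walk.support_append, List.tail_append_of_ne_nil (by simp)]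
  simpa using add_le_add hpwt hqwt

theorem budget_nonneg (hw : ∀ z, 0 ≤ w z) (huv : WithinBudget G w h r u v) : 0 ≤ r := by
  obtain ⟨p, -, hwt⟩ := huv
  exact (List.sum_nonneg (List.forall_mem_map.2 fun z _ => hw z)).trans hwt

theorem exists_isPath [DecidableEq V] (hw : ∀ z, 0 ≤ w z) (hu : WithinBudget G w h r x u)
    (hv : WithinBudget G w h' r' x v) :
    ∃ p : G.Walk u v, p.IsPath ∧ p.length ≤ h + h' ∧
      ∑ z ∈ p.support.toFinset, w z ≤ w x + r + r' := by
  obtain ⟨p, hplen, hpwt⟩ := hu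
  obtain ⟨q, hqlen, hqwt⟩ := hv
  have hpath := (p.reverse.append q).bypass_isPath
  refine ⟨_, hpath, ?_, ?_⟩
  · calc _ ≤ (p.reverse.append q).length := SimpleGraph.Walk.length_bypass_le_length _
      _ ≤ h + h' := by simpa using add_le_add hplen hqlen
  · calc _ = ((p.reverse.append q).bypass.support.map w).sum :=
          List.sum_toFinset w hpath.support_nodup
      _ ≤ ((p.reverse.append q).support.map w).sum :=
          ((SimpleGraph.Walk.support_bypass_sublist_support _).map w).sum_le_sum
            (List.forall_mem_map.2 fun z _ => hw z)
      _ = w x + (p.support.tail.map w).sum + (q.support.tail.map w).sum := by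
          have hcons := congrArg (fun l => (l.map w).sum) p.cons_tail_support
          rw [List.map_cons, List.sum_cons] at hcons
          rw [hcons, SimpleGraph.Walk.support_append]
          simp
      _ ≤ w x + r + r' := by gcongr

end WithinBudget

end WithinBudget

/-! ### Vertex expansion -/

section VertexExpansion

variable {V : Type*} [Fintype V] [DecidableEq V] {G : SimpleGraph V} {κ : ℝ}

open Classical in
/-- The outer vertex boundary of `R`: the vertices outside `R` with a neighbour in `R`. -/
noncomputable def vertexBoundary (G : SimpleGraph V) (R : Finset V) : Finset V :=
  {v | v ∉ R ∧ ∃ u ∈ R, G.Adj u v}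

theorem mem_vertexBoundary {R : Finset V} {v : V} :
    v ∈ vertexBoundary G R ↔ v ∉ R ∧ ∃ u ∈ R, G.Adj u v := by
  simp [vertexBoundary]

theorem vertexBoundary_subset_compl (R : Finset V) : vertexBoundary G R ⊆ Rᶜ :=
  fun _ hv => mem_compl.2 (mem_vertexBoundary.1 hv).1

/-- `G` is a `κ`-vertex expander: `|∂R| ≥ κ · min(|R|, |Rᶜ|)` for every vertex set `R`. -/
def IsVertexExpander (G : SimpleGraph V) (κ : ℝ) : Prop :=
  ∀ R : Finset V, κ * min (#R : ℝ) #Rᶜ ≤ #(vertexBoundary G R)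

theorem card_add_card_compl_real (R : Finset V) : (#R : ℝ) + #Rᶜ = Fintype.card V := by
  exact_mod_cast card_add_card_compl R

theorem IsVertexExpander.le_one [Nontrivial V] (hG : IsVertexExpander G κ) : κ ≤ 1 := by
  have hV : 1 < Fintype.card V := Fintype.one_lt_card
  obtain ⟨R, -, hR⟩ := exists_subset_card_eq (s := (univ : Finset V))
    (n := (Fintype.card V + 1) / 2) (by rw [card_univ]; omega)
  have hcompl := card_add_card_compl R
  have hle : #Rᶜ ≤ #R := by omega
  have hpos : (0 : ℝ) < #Rᶜ := by
    have : 0 < #Rᶜ := by omega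
    exact_mod_cast this
  have hbd : (#(vertexBoundary G R) : ℝ) ≤ #Rᶜ := by
    exact_mod_cast card_le_card (vertexBoundary_subset_compl R)
  have hexp := hG R
  rw [min_eq_right (by exact_mod_cast hle)] at hexp
  exact le_of_mul_le_mul_right (by linarith) hpos

theorem IsVertexExpander.half_mul_card_compl_le (hG : IsVertexExpander G κ) (hκ : 0 ≤ κ)
    {R : Finset V} (hR : Fintype.card V ≤ 3 * #R) :
    κ / 2 * #Rᶜ ≤ #(vertexBoundary G R) := by
  have hcompl := card_add_card_compl R
  have hle : #Rᶜ ≤ 2 * #R := by omega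
  have hmin : (#Rᶜ : ℝ) / 2 ≤ min (#R : ℝ) #Rᶜ := by
    have : (#Rᶜ : ℝ) ≤ 2 * #R := by exact_mod_cast hle
    have : (0 : ℝ) ≤ #Rᶜ := Nat.cast_nonneg _
    exact le_min (by linarith) (by linarith)
  calc κ / 2 * #Rᶜ = κ * (#Rᶜ / 2) := by ring
    _ ≤ κ * min (#R : ℝ) #Rᶜ := by gcongr
    _ ≤ #(vertexBoundary G R) := hG R

theorem cutCard_compl_le_mul_card_vertexBoundary {d : ℕ} (hd : DegLE G d) (R : Finset V) :
    cutCard G (R : Set V) (R : Set V)ᶜ ≤ d * #(vertexBoundary G R) := by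
  classical
  rw [cutCard, Nat.card_eq_fintype_card, Fintype.card_subtype]
  refine card_le_mul_card_image_of_maps_to (f := Prod.snd) (fun p hp => ?_) d fun b _ => ?_
  · obtain ⟨-, hR, hR', hadj⟩ := mem_filter.1 hp
    exact mem_vertexBoundary.2 ⟨hR', p.1, hR, hadj⟩
  · calc _ ≤ #{a | G.Adj b a} := by
          refine card_le_card_of_injOn Prod.fst (fun p hp => ?_) fun p hp q hq hpq => ?_
          · simp only [coe_filter, mem_filter, mem_univ, true_and] at hp ⊢
            exact hp.2 ▸ hp.1.2.2.symm
          · exact Prod.ext hpq ((mem_filter.1 hp).2.trans (mem_filter.1 hq).2.symm)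
      _ = Nat.card {a | G.Adj b a} := by simp [Fintype.card_subtype]
      _ ≤ d := hd b

theorem mul_min_card_le_of_isExpander {d : ℕ} {α : ℝ} (hG : IsExpander G α) (hd : DegLE G d)
    (R : Finset V) : α * min (#R : ℝ) #Rᶜ ≤ d * #(vertexBoundary G R) := by
  rcases R.eq_empty_or_nonempty with rfl | hR
  · simpa using by positivity
  rcases Rᶜ.eq_empty_or_nonempty with hR' | hR'
  · simpa [hR'] using by positivity
  have hcut := hG R hR (by simpa [← coe_compl] using hR')
  rw [← coe_compl, Nat.card_coe_set_eq, Nat.card_coe_set_eq, Set.ncard_coe_finset,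
    Set.ncard_coe_finset, coe_compl] at hcut
  exact hcut.trans (by exact_mod_cast cutCard_compl_le_mul_card_vertexBoundary hd R)

theorem isVertexExpander_of_isExpander {d : ℕ} {α : ℝ} (hG : IsExpander G α) (hd : DegLE G d) :
    IsVertexExpander G (α / d) := fun R => by
  rw [div_mul_eq_mul_div]
  exact div_le_of_le_mul₀ d.cast_nonneg (Nat.cast_nonneg _)
    (by linarith [mul_min_card_le_of_isExpander hG hd R])

end VertexExpansion

theorem degree_bound_pos_of_isExpander {V : Type*} [Finite V] [Nontrivial V] {G : SimpleGraph V}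
    {d : ℕ} {α : ℝ} (hG : IsExpander G α) (hα : 0 < α) (hd : DegLE G d) : 0 < d := by
  classical
  cases nonempty_fintype V
  obtain ⟨v, u, hvu⟩ := exists_pair_ne V
  have hmin : (0 : ℝ) < min (#{v} : ℝ) #{v}ᶜ := by
    have : 0 < #({v} : Finset V)ᶜ := card_pos.2 ⟨u, by simpa using hvu.symm⟩
    exact lt_min (by simp) (by exact_mod_cast this)
  by_contra! hd0
  have hcut := mul_min_card_le_of_isExpander hG hd {v}
  rw [Nat.le_zero.1 hd0, Nat.cast_zero, zero_mul] at hcut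
  exact hcut.not_gt (mul_pos hα hmin)

/-! ### Burning outwards from a set of vertices -/

section Burning

variable {V : Type*} [Fintype V] {G : SimpleGraph V} {w ρ : V → ℝ} {A : Finset V} {κ : ℝ}

/-- The vertices with no fuel left, where `ρ v` is the amount of fuel at `v`. -/
noncomputable def burnt (ρ : V → ℝ) : Finset V := {v | ρ v ≤ 0}

theorem mem_burnt {v : V} : v ∈ burnt ρ ↔ ρ v ≤ 0 := by simp [burnt]

variable [DecidableEq V]

/-- The vertices that are on fire when the fuel is `ρ`: those next to a burnt vertex. -/
noncomputable def fireFront (G : SimpleGraph V) (ρ : V → ℝ) : Finset V :=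
  vertexBoundary G (burnt ρ)

/-- The duration of a round of burning: the median amount of fuel on the fire front. -/
noncomputable def burnTime (G : SimpleGraph V) (ρ : V → ℝ) : ℝ :=
  if h : (fireFront G ρ).Nonempty then ρ (exists_median h ρ).choose else 0

/-- The fuel left after one round, in which every vertex of the fire front burns at unit rate. -/
noncomputable def burn (G : SimpleGraph V) (ρ : V → ℝ) (v : V) : ℝ :=
  if v ∈ fireFront G ρ then max (ρ v - burnTime G ρ) 0 else ρ v

/-- The fuel left after a number of rounds, starting from `ρ`. -/
noncomputable def residual (G : SimpleGraph V) (ρ : V → ℝ) : ℕ → V → ℝ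
  | 0 => ρ
  | k + 1 => burn G (residual G ρ k)

/-- The total duration of those among the first `k` rounds at whose start `v` is not burnt. -/
noncomputable def burnoutTime (G : SimpleGraph V) (ρ : V → ℝ) (k : ℕ) (v : V) : ℝ :=
  ∑ i ∈ range k, if v ∈ burnt (residual G ρ i) then 0 else burnTime G (residual G ρ i)

theorem notMem_burnt_of_mem_fireFront {v : V} (hv : v ∈ fireFront G ρ) : v ∉ burnt ρ :=
  (mem_vertexBoundary.1 hv).1

theorem pos_of_mem_fireFront {v : V} (hv : v ∈ fireFront G ρ) : 0 < ρ v := by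
  simpa [mem_burnt] using notMem_burnt_of_mem_fireFront hv

theorem burnTime_nonneg (G : SimpleGraph V) (ρ : V → ℝ) : 0 ≤ burnTime G ρ := by
  unfold burnTime
  split_ifs with h
  · exact (pos_of_mem_fireFront (exists_median h ρ).choose_spec.1).le
  · exact le_rfl

theorem card_fireFront_le_two_mul_card_le (G : SimpleGraph V) (ρ : V → ℝ) :
    #(fireFront G ρ) ≤ 2 * #{v ∈ fireFront G ρ | ρ v ≤ burnTime G ρ} := by
  unfold burnTime
  split_ifs with h
  · exact (exists_median h ρ).choose_spec.2.1
  · simp [not_nonempty_iff_eq_empty.1 h]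

theorem card_fireFront_le_two_mul_card_ge (G : SimpleGraph V) (ρ : V → ℝ) :
    #(fireFront G ρ) ≤ 2 * #{v ∈ fireFront G ρ | burnTime G ρ ≤ ρ v} := by
  unfold burnTime
  split_ifs with h
  · exact (exists_median h ρ).choose_spec.2.2
  · simp [not_nonempty_iff_eq_empty.1 h]

theorem burn_le (G : SimpleGraph V) (ρ : V → ℝ) : burn G ρ ≤ ρ := fun v => by
  unfold burn
  split_ifs with hv
  · exact max_le (by linarith [burnTime_nonneg G ρ]) (pos_of_mem_fireFront hv).le
  · exact le_rfl

theorem burn_nonneg (hρ : 0 ≤ ρ) : 0 ≤ burn G ρ := fun v => by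
  unfold burn
  split_ifs
  · exact le_max_right _ _
  · exact hρ v

theorem two_mul_card_burnt_add_card_fireFront_le (G : SimpleGraph V) (ρ : V → ℝ) :
    2 * #(burnt ρ) + #(fireFront G ρ) ≤ 2 * #(burnt (burn G ρ)) := by
  have hsub : burnt ρ ∪ {v ∈ fireFront G ρ | ρ v ≤ burnTime G ρ} ⊆ burnt (burn G ρ) := by
    refine union_subset (fun v hv => ?_) fun v hv => ?_
    · exact mem_burnt.2 ((burn_le G ρ v).trans (mem_burnt.1 hv))
    · obtain ⟨hfront, hle⟩ := mem_filter.1 hv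
      rw [mem_burnt, burn, if_pos hfront]
      exact max_le (by linarith) le_rfl
  have hdisj : Disjoint (burnt ρ) {v ∈ fireFront G ρ | ρ v ≤ burnTime G ρ} :=
    disjoint_right.2 fun v hv => notMem_burnt_of_mem_fireFront (mem_filter.1 hv).1
  have hcard := card_le_card hsub
  rw [card_union_of_disjoint hdisj] at hcard
  linarith [card_fireFront_le_two_mul_card_le G ρ]

-- At least half of the front burns throughout the round.
theorem burnTime_mul_card_fireFront_le (G : SimpleGraph V) (ρ : V → ℝ) :
    burnTime G ρ * #(fireFront G ρ) ≤ 2 * (∑ v, ρ v - ∑ v, burn G ρ v) := by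
  have hcard : (#(fireFront G ρ) : ℝ) ≤ 2 * #{v ∈ fireFront G ρ | burnTime G ρ ≤ ρ v} := by
    exact_mod_cast card_fireFront_le_two_mul_card_ge G ρ
  have hburn : ∑ v ∈ fireFront G ρ with burnTime G ρ ≤ ρ v, burnTime G ρ ≤
      ∑ v, (ρ v - burn G ρ v) := by
    refine (sum_le_sum fun v hv => ?_).trans
      (sum_le_univ_sum_of_nonneg fun v => sub_nonneg.2 (burn_le G ρ v))
    obtain ⟨hfront, hle⟩ := mem_filter.1 hv
    rw [burn, if_pos hfront, max_eq_left (by linarith)]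
    linarith
  rw [sum_const, nsmul_eq_mul, sum_sub_distrib] at hburn
  calc burnTime G ρ * #(fireFront G ρ)
      ≤ burnTime G ρ * (2 * #{v ∈ fireFront G ρ | burnTime G ρ ≤ ρ v}) := by
        gcongr
        exact burnTime_nonneg G ρ
    _ ≤ 2 * (∑ v, ρ v - ∑ v, burn G ρ v) := by linarith

theorem residual_antitone (G : SimpleGraph V) (ρ : V → ℝ) : Antitone (residual G ρ) :=
  antitone_nat_of_succ_le fun _ => burn_le G _

theorem residual_nonneg (hρ : 0 ≤ ρ) (k : ℕ) : 0 ≤ residual G ρ k := by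
  induction k with
  | zero => exact hρ
  | succ k ih => exact burn_nonneg ih

theorem burnt_residual_mono (G : SimpleGraph V) (ρ : V → ℝ) :
    Monotone fun k => burnt (residual G ρ k) := fun _ _ hij v hv =>
  mem_burnt.2 ((residual_antitone G ρ hij v).trans (mem_burnt.1 hv))

theorem burnoutTime_nonneg (G : SimpleGraph V) (ρ : V → ℝ) (k : ℕ) (v : V) :
    0 ≤ burnoutTime G ρ k v :=
  sum_nonneg fun i _ => by
    split_ifs
    · exact le_rfl
    · exact burnTime_nonneg G _

theorem burnoutTime_succ (G : SimpleGraph V) (ρ : V → ℝ) (k : ℕ) (v : V) :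
    burnoutTime G ρ (k + 1) v = burnoutTime G ρ k v +
      if v ∈ burnt (residual G ρ k) then 0 else burnTime G (residual G ρ k) :=
  sum_range_succ _ k

theorem burnoutTime_le_of_notMem_burnt {k : ℕ} {v : V} (hv : v ∉ burnt (residual G ρ k)) (u : V) :
    burnoutTime G ρ k u ≤ burnoutTime G ρ k v := by
  refine sum_le_sum fun i hi => ?_
  have hvi : v ∉ burnt (residual G ρ i) := fun h =>
    hv (burnt_residual_mono G ρ (mem_range.1 hi).le h)
  rw [if_neg hvi]
  split_ifs
  · exact burnTime_nonneg G _
  · exact le_rfl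

/-- The initial fuel `w`, removed on the set `A` from which the fire starts. -/
noncomputable def fuelOff (w : V → ℝ) (A : Finset V) : V → ℝ := (A : Set V)ᶜ.indicator w

theorem subset_burnt_residual_fuelOff (G : SimpleGraph V) (w : V → ℝ) (A : Finset V) (k : ℕ) :
    A ⊆ burnt (residual G (fuelOff w A) k) := fun v hv =>
  burnt_residual_mono G _ k.zero_le (mem_burnt.2 (by simp [residual, fuelOff, hv]))

-- A vertex that has caught fire was reached at the time at which it started to burn, and its
-- weight is the total time it takes to burn.
theorem residual_eq_or_exists_withinBudget (hw : ∀ v, 0 < w v) (k : ℕ) (v : V) :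
    residual G (fuelOff w A) k v = w v ∨ ∃ a ∈ A, WithinBudget G w k
      (burnoutTime G (fuelOff w A) k v + residual G (fuelOff w A) k v) a v := by
  induction k generalizing v with
  | zero =>
    by_cases hv : v ∈ A
    · exact .inr ⟨v, hv, by simpa [burnoutTime, residual, fuelOff, hv] using .refl G w v⟩
    · exact .inl (by simp [residual, fuelOff, hv])
  | succ k ih =>
    rw [burnoutTime_succ, residual, burn]
    set ρ := residual G (fuelOff w A) k
    by_cases hv : v ∈ fireFront G ρ
    · right
      obtain ⟨hvb, u, hu, huv⟩ := mem_vertexBoundary.1 hv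
      rw [if_pos hv, if_neg hvb]
      have hle := le_max_left (ρ v - burnTime G ρ) 0
      rcases ih v with hfresh | ⟨a, ha, hav⟩
      · have hρu : ρ u ≤ 0 := mem_burnt.1 hu
        obtain ⟨a, ha, hau⟩ := (ih u).resolve_left (hρu.trans_lt (hw u)).ne
        refine ⟨a, ha, (hau.trans (.of_adj huv)).mono le_rfl ?_⟩
        linarith [burnoutTime_le_of_notMem_burnt hvb u]
      · exact ⟨a, ha, hav.mono k.le_succ (by linarith)⟩
    · rw [if_neg hv]
      refine (ih v).imp_right fun ⟨a, ha, hav⟩ => ⟨a, ha, hav.mono k.le_succ ?_⟩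
      split_ifs <;> linarith [burnTime_nonneg G ρ]

theorem exists_withinBudget_of_mem_burnt (hw : ∀ v, 0 < w v) {k : ℕ} {v : V}
    (hv : v ∈ burnt (residual G (fuelOff w A) k)) :
    ∃ a ∈ A, WithinBudget G w k (burnoutTime G (fuelOff w A) k v) a v := by
  have hle := mem_burnt.1 hv
  obtain ⟨a, ha, hav⟩ :=
    (residual_eq_or_exists_withinBudget hw k v).resolve_left (hle.trans_lt (hw v)).ne
  exact ⟨a, ha, hav.mono le_rfl (by linarith)⟩

theorem sum_burnoutTime (G : SimpleGraph V) (ρ : V → ℝ) (k : ℕ) :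
    ∑ v, burnoutTime G ρ k v =
      ∑ i ∈ range k, burnTime G (residual G ρ i) * #(burnt (residual G ρ i))ᶜ := by
  unfold burnoutTime
  rw [sum_comm]
  refine sum_congr rfl fun i _ => ?_
  simp_rw [← ite_not (_ ∈ _), ← mem_compl]
  rw [sum_ite_mem, univ_inter, sum_const, nsmul_eq_mul, mul_comm]

theorem mul_sum_burnoutTime_le {c : ℝ} (hρ : 0 ≤ ρ) (k : ℕ)
    (hexp : ∀ i < k, c * #(burnt (residual G ρ i))ᶜ ≤ #(fireFront G (residual G ρ i))) :
    c * ∑ v, burnoutTime G ρ k v ≤ 2 * ∑ v, ρ v := by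
  calc c * ∑ v, burnoutTime G ρ k v
      = ∑ i ∈ range k, burnTime G (residual G ρ i) * (c * #(burnt (residual G ρ i))ᶜ) := by
        rw [sum_burnoutTime, mul_sum]
        exact sum_congr rfl fun i _ => by ring
    _ ≤ ∑ i ∈ range k, burnTime G (residual G ρ i) * #(fireFront G (residual G ρ i)) :=
        sum_le_sum fun i hi => mul_le_mul_of_nonneg_left (hexp i (mem_range.1 hi))
          (burnTime_nonneg G _)
    _ ≤ ∑ i ∈ range k, 2 * (∑ v, residual G ρ i v - ∑ v, residual G ρ (i + 1) v) :=
        sum_le_sum fun i _ => burnTime_mul_card_fireFront_le G _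
    _ = 2 * (∑ v, ρ v - ∑ v, residual G ρ k v) := by
        rw [← mul_sum, sum_range_sub' fun i => ∑ v, residual G ρ i v]
        rfl
    _ ≤ 2 * ∑ v, ρ v := by
        linarith [sum_nonneg fun v (_ : v ∈ univ) => residual_nonneg (G := G) hρ k v]

theorem card_compl_burnt_residual_le {c : ℝ} (hc : c ≤ 2) (k : ℕ)
    (hexp : ∀ i < k, c * #(burnt (residual G ρ i))ᶜ ≤ #(fireFront G (residual G ρ i))) :
    (#(burnt (residual G ρ k))ᶜ : ℝ) ≤ (1 - c / 2) ^ k * Fintype.card V := by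
  induction k with
  | zero => simpa using card_le_univ (burnt (residual G ρ 0))ᶜ
  | succ k ih =>
    have hround : (2 * #(burnt (residual G ρ k)) + #(fireFront G (residual G ρ k)) : ℝ) ≤
        2 * #(burnt (residual G ρ (k + 1))) := by
      exact_mod_cast two_mul_card_burnt_add_card_fireFront_le G _
    calc (#(burnt (residual G ρ (k + 1)))ᶜ : ℝ)
        ≤ (1 - c / 2) * #(burnt (residual G ρ k))ᶜ := by
          linarith [hexp k k.lt_succ_self, card_add_card_compl_real (burnt (residual G ρ k)),
            card_add_card_compl_real (burnt (residual G ρ (k + 1)))]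
      _ ≤ (1 - c / 2) * ((1 - c / 2) ^ k * Fintype.card V) :=
          mul_le_mul_of_nonneg_left (ih fun i hi => hexp i (hi.trans k.lt_succ_self))
            (by linarith)
      _ = (1 - c / 2) ^ (k + 1) * Fintype.card V := by ring

theorem IsVertexExpander.exists_withinBudget [Nontrivial V] (hG : IsVertexExpander G κ)
    (hκ : 0 < κ) (hw : ∀ v, 0 < w v) (hA : Fintype.card V ≤ 3 * #A) (k : ℕ) :
    ∃ (R : Finset V) (cost : V → ℝ), (∀ v, 0 ≤ cost v) ∧
      (∀ v ∈ R, ∃ a ∈ A, WithinBudget G w k (cost v) a v) ∧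
      (#Rᶜ : ℝ) ≤ (1 - κ / 4) ^ k * Fintype.card V ∧ ∑ v, cost v ≤ 4 / κ * ∑ v, w v := by
  have hw0 : 0 ≤ w := fun v => (hw v).le
  have hexp : ∀ i < k, κ / 2 * #(burnt (residual G (fuelOff w A) i))ᶜ ≤
      #(fireFront G (residual G (fuelOff w A) i)) := fun i _ =>
    hG.half_mul_card_compl_le hκ.le <| hA.trans <|
      Nat.mul_le_mul_left 3 (card_le_card (subset_burnt_residual_fuelOff G w A i))
  refine ⟨burnt (residual G (fuelOff w A) k), burnoutTime G (fuelOff w A) k,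
    burnoutTime_nonneg G _ k, fun v => exists_withinBudget_of_mem_burnt hw, ?_, ?_⟩
  · have hcard := card_compl_burnt_residual_le (by linarith [hG.le_one]) k hexp
    rwa [div_div, show (2 : ℝ) * 2 = 4 by norm_num] at hcard
  · have hsum := mul_sum_burnoutTime_le (ρ := fuelOff w A)
      (Set.indicator_nonneg fun v _ => hw0 v) k hexp
    have hfuel : ∑ v, fuelOff w A v ≤ ∑ v, w v := sum_le_sum fun v _ =>
      Set.indicator_le_self' (fun v _ => hw0 v) v
    rw [div_mul_eq_mul_div, le_div_iff₀ hκ]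
    linarith

end Burning

/-! ### Routing through a hub -/

section Hub

variable {V : Type*} [Fintype V] {G : SimpleGraph V} {w : V → ℝ}

-- If all of `B` is reached from `A`, then one half of `A` reaches half of `B`; spreading from the
-- part reached restores the size of `B` while the number of sources has halved.
theorem exists_hub [Nonempty V] {h : ℕ} {r : ℝ}
    (hspread : ∀ A : Finset V, Fintype.card V ≤ 3 * #A → ∃ B : Finset V,
      2 * Fintype.card V ≤ 3 * #B ∧ ∀ b ∈ B, ∃ a ∈ A, WithinBudget G w h r a b)
    (L : ℕ) {A B : Finset V} {h₀ : ℕ} {r₀ : ℝ} (hA : #A ≤ 2 ^ L)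
    (hB : 2 * Fintype.card V ≤ 3 * #B) (hAB : ∀ b ∈ B, ∃ a ∈ A, WithinBudget G w h₀ r₀ a b) :
    ∃ x ∈ A, ∃ B' : Finset V, 2 * Fintype.card V ≤ 3 * #B' ∧
      ∀ b ∈ B', WithinBudget G w (h₀ + L * h) (r₀ + L * r) x b := by
  induction L generalizing A B h₀ r₀ with
  | zero =>
    have hV : 0 < Fintype.card V := Fintype.card_pos
    obtain ⟨b, hb⟩ := card_pos.1 (by omega : 0 < #B)
    obtain ⟨x, hx, -⟩ := hAB b hb
    refine ⟨x, hx, B, hB, fun b hb => ?_⟩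
    obtain ⟨a, ha, hab⟩ := hAB b hb
    rw [card_le_one_iff.1 hA hx ha]
    simpa using hab
  | succ L ih =>
    obtain ⟨A', hA'A, hA', B₀, -, hB₀, hreach⟩ :=
      exists_subset_reaching_half (by rwa [← pow_succ']) hAB
    obtain ⟨C, hC, hBC⟩ := hspread B₀ (by omega)
    have hA'C : ∀ c ∈ C, ∃ a ∈ A', WithinBudget G w (h₀ + h) (r₀ + r) a c := fun c hc => by
      obtain ⟨b, hb, hbc⟩ := hBC c hc
      obtain ⟨a, ha, hab⟩ := hreach b hb
      exact ⟨a, ha, hab.trans hbc⟩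
    obtain ⟨x, hx, B', hB', hxB'⟩ := ih hA' hC hA'C
    exact ⟨x, hA'A hx, B', hB', fun b hb =>
      (hxB' b hb).mono (by rw [add_one_mul]; omega) (by push_cast; linarith)⟩

theorem two_mul_card_le_three_mul_card_light [Nonempty V] (hw : ∀ v, 0 < w v) :
    2 * Fintype.card V ≤ 3 * #{v | w v ≤ 3 * (∑ v, w v) / Fintype.card V} := by
  have hheavy := mul_card_filter_lt_le_card (fun v => (hw v).le)
    (sum_pos (fun v _ => hw v) univ_nonempty) le_rfl 3
  have hsplit := card_filter_add_card_filter_not (s := univ)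
    fun v => w v ≤ 3 * (∑ v, w v) / Fintype.card V
  simp only [not_le, card_univ] at hsplit
  have : 3 * #{v | 3 * (∑ v, w v) / Fintype.card V < w v} ≤ Fintype.card V := by
    exact_mod_cast hheavy
  omega

variable [DecidableEq V] [Nontrivial V] {κ : ℝ} {m ℓ : ℕ}

theorem IsVertexExpander.exists_spread (hG : IsVertexExpander G κ) (hκ : 0 < κ)
    (hw : ∀ v, 0 < w v) (hm : (1 - κ / 4) ^ m ≤ 1 / 6) (A : Finset V)
    (hA : Fintype.card V ≤ 3 * #A) :
    ∃ B : Finset V, 2 * Fintype.card V ≤ 3 * #B ∧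
      ∀ b ∈ B, ∃ a ∈ A, WithinBudget G w m (6 * (4 / κ * ∑ v, w v) / Fintype.card V) a b := by
  obtain ⟨R, cost, hcost, hreach, hR, hsum⟩ := hG.exists_withinBudget hκ hw hA m
  set S := 4 / κ * ∑ v, w v
  have hSpos : 0 < S := mul_pos (by positivity) (sum_pos (fun v _ => hw v) univ_nonempty)
  let costly : Finset V := {v | 6 * S / Fintype.card V < cost v}
  have hunreached : 6 * #Rᶜ ≤ Fintype.card V := by
    have : 6 * (#Rᶜ : ℝ) ≤ 6 * (1 / 6 * Fintype.card V) := by gcongr; exact hR.trans (by gcongr)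
    rw [← mul_assoc, mul_one_div_cancel (by norm_num), one_mul] at this
    exact_mod_cast this
  have hcostly : 6 * #costly ≤ Fintype.card V := by
    exact_mod_cast mul_card_filter_lt_le_card hcost hSpos hsum 6
  refine ⟨R \ costly, ?_, fun b hb => ?_⟩
  · have hRV := card_add_card_compl R
    have hsdiff := le_card_sdiff costly R
    omega
  · obtain ⟨hbR, hb⟩ := mem_sdiff.1 hb
    obtain ⟨a, ha, hab⟩ := hreach b hbR
    exact ⟨a, ha, hab.mono le_rfl (by simpa [costly] using hb)⟩

theorem IsVertexExpander.exists_light_hub (hG : IsVertexExpander G κ) (hκ : 0 < κ)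
    (hw : ∀ v, 0 < w v) (hm : (1 - κ / 4) ^ m ≤ 1 / 6) (hℓ : Fintype.card V ≤ 2 ^ ℓ) :
    ∃ x, w x ≤ 3 * (∑ v, w v) / Fintype.card V ∧
      ∃ B : Finset V, 2 * Fintype.card V ≤ 3 * #B ∧ ∀ b ∈ B,
        WithinBudget G w (m * ℓ) (ℓ * (6 * (4 / κ * ∑ v, w v) / Fintype.card V)) x b := by
  have hlight := two_mul_card_le_three_mul_card_light hw
  set light : Finset V := {v | w v ≤ 3 * (∑ v, w v) / Fintype.card V}
  obtain ⟨x, hx, B, hB, hxB⟩ := exists_hub (hG.exists_spread hκ hw hm) ℓ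
    ((card_le_univ light).trans hℓ) hlight fun b hb => ⟨b, hb, .refl G w b⟩
  exact ⟨x, (mem_filter.1 hx).2, B, hB, fun b hb =>
    (hxB b hb).mono (by rw [zero_add, mul_comm]) (by rw [zero_add])⟩

theorem IsVertexExpander.exists_withinBudget_univ (hG : IsVertexExpander G κ) (hκ : 0 < κ)
    (hw : ∀ v, 0 < w v) (hm : (1 - κ / 4) ^ m ≤ 1 / 6) (hℓ : Fintype.card V ≤ 2 ^ ℓ)
    {A : Finset V} (hA : Fintype.card V ≤ 3 * #A) :
    ∃ cost : V → ℝ, (∀ v, ∃ a ∈ A, WithinBudget G w (m * ℓ) (cost v) a v) ∧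
      ∑ v, cost v ≤ 4 / κ * ∑ v, w v := by
  obtain ⟨R, cost, -, hreach, hR, hsum⟩ := hG.exists_withinBudget hκ hw hA (m * ℓ)
  have hκ1 := hG.le_one
  have hℓ0 : ℓ ≠ 0 := by
    rintro rfl
    exact hℓ.not_gt Fintype.one_lt_card
  have hlt : (#Rᶜ : ℝ) < 1 := by
    calc (#Rᶜ : ℝ) ≤ ((1 - κ / 4) ^ m) ^ ℓ * Fintype.card V := by rwa [← pow_mul]
      _ ≤ (1 / 6) ^ ℓ * 2 ^ ℓ := by
          have : (0 : ℝ) ≤ (1 - κ / 4) ^ m := pow_nonneg (by linarith) m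
          gcongr
          exact_mod_cast hℓ
      _ = (1 / 3) ^ ℓ := by rw [← mul_pow]; norm_num
      _ < 1 := pow_lt_one₀ (by norm_num) (by norm_num) hℓ0
  have hRuniv : R = univ := by
    rw [← compl_eq_empty_iff, ← card_eq_zero]
    exact Nat.lt_one_iff.1 (by exact_mod_cast hlt)
  exact ⟨cost, fun v => hreach v (hRuniv ▸ mem_univ v), hsum⟩

theorem IsVertexExpander.exists_root (hG : IsVertexExpander G κ) (hκ : 0 < κ)
    (hw : ∀ v, 0 < w v) (hm : (1 - κ / 4) ^ m ≤ 1 / 6) (hℓ : Fintype.card V ≤ 2 ^ ℓ) :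
    ∃ (x : V) (cost : V → ℝ), (∀ v, WithinBudget G w (2 * (m * ℓ)) (cost v) x v) ∧
      ∑ v, (w x + cost v) ≤ 31 * ℓ / κ * ∑ v, w v := by
  obtain ⟨x, hx, B, hB, hxB⟩ := hG.exists_light_hub hκ hw hm hℓ
  obtain ⟨cost, hBV, hsum⟩ :=
    hG.exists_withinBudget_univ hκ hw hm hℓ (by omega : Fintype.card V ≤ 3 * #B)
  set W := ∑ v, w v
  set n := Fintype.card V
  have hn : (0 : ℝ) < n := Nat.cast_pos.2 Fintype.card_pos
  have hW : 0 ≤ W := sum_nonneg fun v _ => (hw v).le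
  have hℓ1 : (1 : ℝ) ≤ ℓ := by
    rw [Nat.one_le_cast, Nat.one_le_iff_ne_zero]
    rintro rfl
    exact hℓ.not_gt Fintype.one_lt_card
  have hratio : 1 ≤ ℓ / κ := (one_le_div hκ).2 (hG.le_one.trans hℓ1)
  refine ⟨x, fun v => ℓ * (6 * (4 / κ * W) / n) + cost v, fun v => ?_, ?_⟩
  · obtain ⟨b, hb, hbv⟩ := hBV v
    exact ((hxB b hb).trans hbv).mono (by omega) le_rfl
  · calc ∑ v, (w x + (ℓ * (6 * (4 / κ * W) / n) + cost v))
        = n * w x + (n * (ℓ * (6 * (4 / κ * W) / n)) + ∑ v, cost v) := by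
          simp [sum_add_distrib, n]
      _ ≤ n * (3 * W / n) + (n * (ℓ * (6 * (4 / κ * W) / n)) + 4 / κ * W) := by gcongr
      _ = (3 * 1 + 24 * (ℓ / κ) + 4 * (1 / κ)) * W := by field_simp; ring
      _ ≤ (3 * (ℓ / κ) + 24 * (ℓ / κ) + 4 * (ℓ / κ)) * W := by gcongr
      _ = 31 * ℓ / κ * W := by ring

theorem IsVertexExpander.exists_isPath_sum_le (hG : IsVertexExpander G κ) (hκ : 0 < κ)
    (hw : ∀ v, 0 < w v) (hm : (1 - κ / 4) ^ m ≤ 1 / 6) (hℓ : Fintype.card V ≤ 2 ^ ℓ)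
    {ι : Type*} [Fintype ι] {s t : ι → V} (hst : Function.Injective (Sum.elim s t)) :
    ∃ Q : ∀ i, G.Walk (s i) (t i), (∀ i, (Q i).IsPath ∧ (Q i).length ≤ 4 * (m * ℓ)) ∧
      ∑ i, ∑ v ∈ (Q i).support.toFinset, w v ≤ 31 * ℓ / κ * ∑ v, w v := by
  have hw0 : ∀ v, 0 ≤ w v := fun v => (hw v).le
  obtain ⟨x, cost, hreach, hsum⟩ := hG.exists_root hκ hw hm hℓ
  choose Q hQ hlen hwt using fun i => (hreach (s i)).exists_isPath hw0 (hreach (t i))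
  refine ⟨Q, fun i => ⟨hQ i, (hlen i).trans (by omega)⟩, ?_⟩
  calc ∑ i, ∑ v ∈ (Q i).support.toFinset, w v
      ≤ ∑ i, ((w x + cost (s i)) + (w x + cost (t i))) :=
        sum_le_sum fun i _ => (hwt i).trans (by linarith [hw x])
    _ ≤ ∑ v, (w x + cost v) :=
        sum_endpoints_le hst fun v => add_nonneg (hw0 x) ((hreach v).budget_nonneg hw0)
    _ ≤ 31 * ℓ / κ * ∑ v, w v := hsum

end Hub

/-! ### Low load from low weighted averages -/

section Load

variable {ι V : Type*} [Fintype ι] [DecidableEq V]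

/-- The number of members of the family `Q` that contain `v`. -/
def load (Q : ι → Finset V) (v : V) : ℕ := #{i | v ∈ Q i}

theorem load_update [DecidableEq ι] (Q : ι → Finset V) (i : ι) (P : Finset V) (v : V) :
    load (Function.update Q i P) v + (if v ∈ Q i then 1 else 0) =
      load Q v + if v ∈ P then 1 else 0 := by
  simp_rw [load, card_filter, ← add_sum_erase univ _ (mem_univ i), Function.update_self]
  have hrest : ∑ j ∈ univ.erase i, (if v ∈ Function.update Q i P j then 1 else 0) =
      ∑ j ∈ univ.erase i, if v ∈ Q j then 1 else 0 :=
    sum_congr rfl fun j hj => by rw [Function.update_of_ne (ne_of_mem_erase hj)]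
  rw [hrest]
  ring

theorem two_pow_load_update_le [DecidableEq ι] (Q : ι → Finset V) (i : ι) (P : Finset V) (v : V) :
    2 * 2 ^ load (Function.update Q i P) v + (if v ∈ Q i then 2 ^ load Q v else 0) ≤
      2 * 2 ^ load Q v + 2 * if v ∈ P then 2 ^ load Q v else 0 := by
  have hload := load_update Q i P v
  split_ifs at hload ⊢ <;> grind [pow_succ]

theorem sum_mul_two_pow_load [Fintype V] (Q : ι → Finset V) :
    ∑ v, (load Q v : ℝ) * 2 ^ load Q v = ∑ i, ∑ v ∈ Q i, (2 : ℝ) ^ load Q v := by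
  rw [sum_comm' (t' := univ) (s' := fun v => {i | v ∈ Q i}) (by simp)]
  simp [load]

theorem sum_two_pow_load_le_of_minimal [Fintype V] [DecidableEq ι] {Q : ι → Finset V} {i : ι}
    {P : Finset V} (hQ : ∑ v, 2 ^ load Q v ≤ ∑ v, 2 ^ load (Function.update Q i P) v) :
    ∑ v ∈ Q i, 2 ^ load Q v ≤ 2 * ∑ v ∈ P, 2 ^ load Q v := by
  have hupdate := sum_le_sum fun v (_ : v ∈ univ) => two_pow_load_update_le Q i P v
  simp_rw [sum_add_distrib, ← mul_sum, sum_ite_mem, univ_inter] at hupdate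
  omega

end Load

theorem le_of_sum_mul_two_pow_le {V : Type*} [Fintype V] {f : V → ℕ} {c : ℝ} (hc : 0 ≤ c)
    (hf : ∑ v, (f v : ℝ) * 2 ^ f v ≤ c * ∑ v, (2 : ℝ) ^ f v) (v : V) :
    (f v : ℝ) ≤ 2 * c + Real.logb 2 (Fintype.card V) := by
  classical
  have hn : (0 : ℝ) < Fintype.card V := Nat.cast_pos.2 (Fintype.card_pos_iff.2 ⟨v⟩)
  have hlog : 0 ≤ Real.logb 2 (Fintype.card V) :=
    Real.logb_nonneg one_lt_two (Nat.one_le_cast.2 (Nat.cast_pos.1 hn))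
  by_contra! hlarge
  have hterm : ∀ u, (c - f u) * 2 ^ f u ≤ c * 2 ^ c := fun u => by
    rcases le_total c (f u) with hcu | huc
    · exact (mul_nonpos_of_nonpos_of_nonneg (by linarith) (by positivity)).trans (by positivity)
    · rw [← Real.rpow_natCast]
      gcongr
      · linarith [Nat.cast_nonneg (α := ℝ) (f u)]
      · exact one_le_two
  have hrest : ∑ u ∈ univ.erase v, (c - f u) * 2 ^ f u ≤ Fintype.card V * (c * 2 ^ c) := by
    calc _ ≤ #(univ.erase v) • (c * 2 ^ c) := sum_le_card_nsmul _ _ _ fun u _ => hterm u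
      _ ≤ _ := by
          rw [nsmul_eq_mul]
          gcongr
          exact card_le_univ _
  have hv : (Fintype.card V : ℝ) * 2 ^ c ≤ 2 ^ f v := by
    calc _ = (2 : ℝ) ^ (Real.logb 2 (Fintype.card V) + c) := by
          rw [Real.rpow_add two_pos, Real.rpow_logb two_pos (by norm_num) hn]
      _ ≤ 2 ^ (f v : ℝ) := Real.rpow_le_rpow_of_exponent_le one_le_two (by linarith)
      _ = 2 ^ f v := Real.rpow_natCast 2 _
  have hsum : 0 ≤ ∑ u, (c - f u) * 2 ^ f u := by
    simp_rw [sub_mul, sum_sub_distrib, ← mul_sum]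
    linarith
  rw [← add_sum_erase _ _ (mem_univ v)] at hsum
  have hgap : c * (Fintype.card V * 2 ^ c) < (f v - c) * 2 ^ f v :=
    (mul_lt_mul_of_pos_right (by linarith) (by positivity)).trans_le
      (mul_le_mul_of_nonneg_left hv (by linarith))
  linarith

-- A choice that minimises `∑ 2 ^ load` is optimal up to a factor 2 for the weights `2 ^ load`.
theorem exists_load_le {ι V : Type*} [Fintype ι] [Fintype V] [DecidableEq V]
    (F : ι → Set (Finset V)) {c : ℝ} (hc : 0 ≤ c)
    (hF : ∀ w : V → ℝ, (∀ v, 0 < w v) →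
      ∃ P : ι → Finset V, (∀ i, P i ∈ F i) ∧ ∑ i, ∑ v ∈ P i, w v ≤ c * ∑ v, w v) :
    ∃ Q : ι → Finset V, (∀ i, Q i ∈ F i) ∧
      ∀ v, (load Q v : ℝ) ≤ 4 * c + Real.logb 2 (Fintype.card V) := by
  classical
  have hne : {Q : ι → Finset V | ∀ i, Q i ∈ F i}.Nonempty :=
    let ⟨P, hP, _⟩ := hF 1 fun _ => one_pos
    ⟨P, hP⟩
  let potential (Q : ι → Finset V) : ℕ := ∑ v, 2 ^ load Q v
  obtain ⟨Q, hQ, hmin⟩ := Set.exists_min_image _ potential (Set.toFinite _) hne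
  have hopt : ∀ i, ∀ P ∈ F i, ∑ v ∈ Q i, 2 ^ load Q v ≤ 2 * ∑ v ∈ P, 2 ^ load Q v :=
    fun i P hP => sum_two_pow_load_le_of_minimal <| hmin _ fun j => by
      rcases eq_or_ne j i with rfl | hji
      · rwa [Function.update_self]
      · rw [Function.update_of_ne hji]
        exact hQ j
  refine ⟨Q, hQ, fun v => ?_⟩
  obtain ⟨P, hP, hsum⟩ := hF (fun v => 2 ^ load Q v) fun v => by positivity
  have hload : ∑ v, (load Q v : ℝ) * 2 ^ load Q v ≤ 2 * c * ∑ v, (2 : ℝ) ^ load Q v := by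
    calc _ = ∑ i, ∑ v ∈ Q i, (2 : ℝ) ^ load Q v := sum_mul_two_pow_load Q
      _ ≤ ∑ i, 2 * ∑ v ∈ P i, (2 : ℝ) ^ load Q v :=
          sum_le_sum fun i _ => by exact_mod_cast hopt i (P i) (hP i)
      _ ≤ 2 * c * ∑ v, (2 : ℝ) ^ load Q v := by rw [← mul_sum]; linarith
  linarith [le_of_sum_mul_two_pow_le (by positivity) hload v]

/-! ### Routing a matching -/

theorem natClog_two_le_two_mul_logb {n : ℕ} (hn : 2 ≤ n) :
    (Nat.clog 2 n : ℝ) ≤ 2 * Real.logb 2 n := by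
  have hlog : 1 ≤ Real.logb 2 n := by
    rw [Real.le_logb_iff_rpow_le one_lt_two (by positivity), Real.rpow_one]
    exact_mod_cast hn
  rw [← Real.natCeil_logb_natCast 2 n, Nat.cast_ofNat]
  linarith [Nat.ceil_lt_add_one (zero_le_one.trans hlog)]

theorem exists_pow_le_one_sixth {κ : ℝ} (hκ : 0 < κ) (hκ1 : κ ≤ 1) :
    ∃ m : ℕ, (1 - κ / 4) ^ m ≤ 1 / 6 ∧ (m : ℝ) ≤ 21 / κ := by
  refine ⟨⌈20 / κ⌉₊, ?_, ?_⟩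
  · have hexponent : 5 ≤ ⌈20 / κ⌉₊ * (κ / 4) := by
      calc (5 : ℝ) = 20 / κ * (κ / 4) := by field_simp; norm_num
        _ ≤ _ := by gcongr; exact Nat.le_ceil _
    calc (1 - κ / 4) ^ ⌈20 / κ⌉₊ ≤ Real.exp (-(κ / 4)) ^ ⌈20 / κ⌉₊ := by
          gcongr
          · linarith
          · exact Real.one_sub_le_exp_neg _
      _ = (Real.exp (⌈20 / κ⌉₊ * (κ / 4)))⁻¹ := by
          rw [← Real.exp_nat_mul, mul_neg, Real.exp_neg]
      _ ≤ 6⁻¹ := by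
          gcongr
          linarith [Real.add_one_le_exp (⌈20 / κ⌉₊ * (κ / 4))]
      _ = 1 / 6 := inv_eq_one_div 6
  · calc (⌈20 / κ⌉₊ : ℝ) ≤ 20 / κ + 1 := (Nat.ceil_lt_add_one (by positivity)).le
      _ ≤ 20 / κ + 1 / κ := by gcongr; exact (one_le_div hκ).2 hκ1
      _ = 21 / κ := by ring

theorem IsVertexExpander.exists_isPath_load_le {V : Type*} [Fintype V] [DecidableEq V]
    [Nontrivial V] {G : SimpleGraph V} {κ : ℝ} (hG : IsVertexExpander G κ) (hκ : 0 < κ)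
    {ι : Type*} [Fintype ι] {s t : ι → V} (hst : Function.Injective (Sum.elim s t)) :
    ∃ Q : ∀ i, G.Walk (s i) (t i), (∀ i, (Q i).IsPath) ∧
      (∀ i, ((Q i).length : ℝ) ≤ 250 * Real.logb 2 (Fintype.card V) / κ) ∧
      ∀ v, (load (fun i => (Q i).support.toFinset) v : ℝ) ≤
        250 * Real.logb 2 (Fintype.card V) / κ := by
  obtain ⟨m, hm, hmκ⟩ := exists_pow_le_one_sixth hκ hG.le_one
  set ℓ := Nat.clog 2 (Fintype.card V)
  set L := Real.logb 2 (Fintype.card V)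
  have hℓL : (ℓ : ℝ) ≤ 2 * L := natClog_two_le_two_mul_logb Fintype.one_lt_card
  have hL : 0 ≤ L := by linarith [Nat.cast_nonneg (α := ℝ) ℓ]
  obtain ⟨P, hP, hload⟩ := exists_load_le
    (fun i => {P | ∃ q : G.Walk (s i) (t i),
      (q.IsPath ∧ q.length ≤ 4 * (m * ℓ)) ∧ q.support.toFinset = P})
    (c := 31 * ℓ / κ) (by positivity) fun w hw => by
      obtain ⟨Q, hQ, hsum⟩ :=
        hG.exists_isPath_sum_le hκ hw hm (Nat.le_pow_clog one_lt_two _) hst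
      exact ⟨fun i => (Q i).support.toFinset, fun i => ⟨Q i, hQ i, rfl⟩, hsum⟩
  choose Q hQ hQP using hP
  obtain rfl : (fun i => (Q i).support.toFinset) = P := funext hQP
  refine ⟨Q, fun i => (hQ i).1, fun i => ?_, fun v => (hload v).trans ?_⟩
  · calc ((Q i).length : ℝ) ≤ 4 * (m * ℓ) := by exact_mod_cast (hQ i).2
      _ ≤ 4 * (21 / κ * (2 * L)) := by gcongr
      _ = 168 * L / κ := by ring
      _ ≤ 250 * L / κ := by gcongr; norm_num
  · calc 4 * (31 * ℓ / κ) + L ≤ 4 * (31 * (2 * L) / κ) + L / κ := by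
          gcongr
          exact le_div_self hL hκ hG.le_one
      _ = 249 * L / κ := by ring
      _ ≤ 250 * L / κ := by gcongr; norm_num

theorem injective_elim_fst_snd {V : Type*} {M : Set (V × V)} (hM : ∀ p ∈ M, p.1 ≠ p.2)
    (hM' : ∀ p ∈ M, ∀ q ∈ M, p ≠ q → p.1 ≠ q.1 ∧ p.1 ≠ q.2 ∧ p.2 ≠ q.1 ∧ p.2 ≠ q.2) :
    Function.Injective (Sum.elim (fun p : M => p.1.1) fun p : M => p.1.2) := by
  refine Function.Injective.sumElim (fun p q h => ?_) (fun p q h => ?_) fun p q => ?_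
  · by_contra hpq
    exact (hM' p p.2 q q.2 (Subtype.coe_ne_coe.2 hpq)).1 h
  · by_contra hpq
    exact (hM' p p.2 q q.2 (Subtype.coe_ne_coe.2 hpq)).2.2.2 h
  · rcases eq_or_ne p q with rfl | hpq
    · exact hM p p.2
    · exact (hM' p p.2 q q.2 (Subtype.coe_ne_coe.2 hpq)).2.1

end MatchingRouting

open MatchingRouting in
theorem route_matching_low_congestion_or_sparse_cut_general {V : Type*} [Finite V] [Nontrivial V]
    {G : SimpleGraph V} {d : ℕ} {α : ℝ} (hd : DegLE G d) (hα : 0 < α) {M : Set (V × V)}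
    (hM : ∀ p ∈ M, p.1 ≠ p.2)
    (hM' : ∀ p ∈ M, ∀ q ∈ M, p ≠ q → p.1 ≠ q.1 ∧ p.1 ≠ q.2 ∧ p.2 ≠ q.1 ∧ p.2 ≠ q.2) :
    (∃ Q : (p : M) → G.Walk p.val.1 p.val.2,
        (∀ p, (Q p).IsPath) ∧
        (∀ p, ((Q p).length : ℝ) ≤ 250 * d * Real.logb 2 (Nat.card V) / α) ∧
        (∀ v : V, (Nat.card ↥{p : M | v ∈ (Q p).support} : ℝ) ≤
          250 * d * Real.logb 2 (Nat.card V) / α)) ∨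
    (∃ S : Set V, S.Nonempty ∧ Sᶜ.Nonempty ∧
      (cutCard G S Sᶜ : ℝ) < α * (min (Nat.card ↥S) (Nat.card ↥(Sᶜ)) : ℝ)) := by
  classical
  cases nonempty_fintype V
  refine or_iff_not_imp_right.2 fun hno => ?_
  have hexpander : IsExpander G α := fun S hS hS' => not_lt.1 fun h => hno ⟨S, hS, hS', h⟩
  have hd0 : (0 : ℝ) < d := Nat.cast_pos.2 (degree_bound_pos_of_isExpander hexpander hα hd)
  obtain ⟨Q, hpath, hlength, hload⟩ := (isVertexExpander_of_isExpander hexpander hd)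
    |>.exists_isPath_load_le (by positivity) (injective_elim_fst_snd hM hM')
  have hbound : 250 * Real.logb 2 (Fintype.card V) / (α / d) =
      250 * d * Real.logb 2 (Nat.card V) / α := by
    rw [div_div_eq_mul_div, Nat.card_eq_fintype_card]
    ring
  refine ⟨Q, hpath, fun p => hbound ▸ hlength p, fun v => ?_⟩
  rw [← hbound]
  convert hload v
  simp [load, Fintype.card_subtype]

/-- Routing a matching with low vertex-congestion on short paths, or finding a sparse
cut: for any partial matching `M` on the vertices of `G`, either every pair of `M` can
be connected by a path of length at most `c·d·log₂ n/α` so that every vertex lies on at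
most `c·d·log₂ n/α` of the paths, or `G` has a cut of sparsity less than `α`. -/
theorem route_matching_low_congestion_or_sparse_cut :
    ∃ c : ℝ, 0 < c ∧
      ∀ (V : Type) [Fintype V] (G : SimpleGraph V) (n d : ℕ) (α : ℝ),
        Nat.card V = n → 2 ≤ n → DegLE G d → 0 < α → α < 1 →
        ∀ M : Set (V × V),
          (∀ p ∈ M, p.1 ≠ p.2) →
          (∀ p ∈ M, ∀ q ∈ M, p ≠ q →
            p.1 ≠ q.1 ∧ p.1 ≠ q.2 ∧ p.2 ≠ q.1 ∧ p.2 ≠ q.2) →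
          (∃ Q : (p : M) → G.Walk p.val.1 p.val.2,
              (∀ p, (Q p).IsPath) ∧
              (∀ p, ((Q p).length : ℝ) ≤ c * d * Real.logb 2 n / α) ∧
              (∀ v : V,
                (Nat.card ↥{p : M | v ∈ (Q p).support} : ℝ) ≤
                  c * d * Real.logb 2 n / α)) ∨
          (∃ S : Set V, S.Nonempty ∧ Sᶜ.Nonempty ∧
              (cutCard G S Sᶜ : ℝ) <
                α * (min (Nat.card ↥S) (Nat.card ↥(Sᶜ)) : ℝ)) := by
  refine ⟨250, by norm_num, fun V _ G n d α hn hn2 hd hα _ M hM hM' => ?_⟩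
  have : Nontrivial V := Finite.one_lt_card_iff_nontrivial.1 (hn ▸ hn2)
  exact hn ▸ route_matching_low_congestion_or_sparse_cut_general hd hα hM hM'
end

section
/- There is a universal constant c > 0 such that the following holds. Let Σ = (S, M, A₁, B₃) be an α-expanding Path-of-Sets System of width w and length 3, where 0 < α < 1, whose corresponding graph G_Σ has maximum vertex degree at most d. Then there exist subsets Â₁ ⊆ A₁ and B̂₃ ⊆ B₃, each of cardinality at least c·α²·w/d³, such that the set Â₁ ∪ B̂₃ is well-linked in G_Σ. -/
/-- A set `A` of vertices of `G` is well-linked: for every pair `A', A''` of disjoint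
equal-cardinality subsets of `A`, there are `|A'|` vertex-disjoint paths connecting `A'`
to `A''`, internally disjoint from `A`. -/
def WellLinked {V : Type*} (G : SimpleGraph V) (A : Set V) : Prop :=
  ∀ A' A'' : Set V, A' ⊆ A → A'' ⊆ A → Disjoint A' A'' →
    Nat.card ↥A' = Nat.card ↥A'' →
    ∃ f : ↥A' → ↥A'', Function.Bijective f ∧
      ∃ p : ∀ a : ↥A', G.Walk a.val (f a).val,
        (∀ a, (p a).IsPath) ∧
        (∀ a b, a ≠ b → ∀ x, x ∈ (p a).support → x ∉ (p b).support) ∧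
        (∀ a, ∀ x ∈ (p a).support, x ∈ A → x = a.val ∨ x = (f a).val)

/-- A Path-of-Sets System of length `ℓ` and width `w` on the ambient vertex type `V`:
pairwise disjoint clusters (connected graphs `S i` on the vertex sets `VS i`), subsets
`A i, B i ⊆ VS i` of `w` vertices each, and, for each `i < ℓ - 1`, a perfect matching
`M i` between `B i` and `A (i+1)`. -/
structure PathOfSets (V : Type) (ℓ w : ℕ) where
  VS : Fin ℓ → Set V
  S : Fin ℓ → SimpleGraph V
  A : Fin ℓ → Set V
  B : Fin ℓ → Set V
  M : Fin ℓ → Set (V × V)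
  VS_disj : ∀ i j, i ≠ j → Disjoint (VS i) (VS j)
  S_supp : ∀ i u v, (S i).Adj u v → u ∈ VS i ∧ v ∈ VS i
  S_conn : ∀ i, ((S i).induce (VS i)).Connected
  A_sub : ∀ i, A i ⊆ VS i
  B_sub : ∀ i, B i ⊆ VS i
  AB_disj : ∀ i, Disjoint (A i) (B i)
  A_card : ∀ i, Nat.card ↥(A i) = w
  B_card : ∀ i, Nat.card ↥(B i) = w
  M_mem : ∀ i p, p ∈ M i →
    ∃ h : (i : ℕ) + 1 < ℓ, p.1 ∈ B i ∧ p.2 ∈ A ⟨(i : ℕ) + 1, h⟩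
  M_match₁ : ∀ (i : Fin ℓ), (i : ℕ) + 1 < ℓ → ∀ b ∈ B i, ∃! a : V, (b, a) ∈ M i
  M_match₂ : ∀ (i : Fin ℓ) (h : (i : ℕ) + 1 < ℓ),
    ∀ a ∈ A ⟨(i : ℕ) + 1, h⟩, ∃! b : V, (b, a) ∈ M i

/-- The graph `G_Σ` corresponding to a Path-of-Sets System: the union of all clusters
together with all matching edges. -/
def PathOfSets.graph {V : Type} {ℓ w : ℕ} (P : PathOfSets V ℓ w) : SimpleGraph V :=
  (⨆ i, P.S i) ⊔ SimpleGraph.fromRel (fun u v => ∃ i, (u, v) ∈ P.M i)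

/-!
A vertex set that small separations cannot split evenly orients every separation of small order
towards its large side, which gives a tangle. The sets `I` that no small side contains at an order
below `|I|` are the independent sets of a matroid (the tangle matroid), because the order of a
separation is submodular; and by Menger's theorem an independent set is well-linked. In an
expanding Path-of-Sets System every cluster is such a vertex set, since a separation of order `x`
cuts at most `d x` edges of a cluster, and the perfect matchings force all clusters to orient a
separation alike. Hence no small side contains `A i` or `B j`, so an independent set can be grown
inside `A i` and then extended inside `B j`, up to the order of the tangle, which is about
`α w / d`.
-/

variable {V : Type*} {G : SimpleGraph V}

/-! ### Separations -/

/-- `(A, B)` is a separation of `G`: the two sides cover all vertices and no edge joins `A \ B` to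
`B \ A`. Its order is `(A ∩ B).ncard`. -/
structure IsSeparation (G : SimpleGraph V) (A B : Set V) : Prop where
  mem_or_mem : ∀ v, v ∈ A ∨ v ∈ B
  not_adj : ∀ ⦃u v⦄, u ∉ B → v ∉ A → ¬ G.Adj u v

namespace IsSeparation

variable {A B C D : Set V}

theorem symm (h : IsSeparation G A B) : IsSeparation G B A :=
  ⟨fun v ↦ (h.mem_or_mem v).symm, fun _ _ hu hv huv ↦ h.not_adj hv hu huv.symm⟩

theorem univ_right (G : SimpleGraph V) (A : Set V) : IsSeparation G A Set.univ :=
  ⟨fun v ↦ .inr (Set.mem_univ v), fun u _ hu ↦ (hu (Set.mem_univ u)).elim⟩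

theorem union_inter (h : IsSeparation G A B) (h' : IsSeparation G C D) :
    IsSeparation G (A ∪ C) (B ∩ D) where
  mem_or_mem v := by
    have := h.mem_or_mem v
    have := h'.mem_or_mem v
    simp only [Set.mem_union, Set.mem_inter_iff]
    tauto
  not_adj u v hu hv := by
    simp only [Set.mem_union, not_or] at hv
    by_cases hB : u ∈ B
    · exact h'.not_adj (fun hD ↦ hu ⟨hB, hD⟩) hv.2
    · exact h.not_adj hB hv.1

theorem inter_union (h : IsSeparation G A B) (h' : IsSeparation G C D) :
    IsSeparation G (A ∩ C) (B ∪ D) :=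
  (h.symm.union_inter h'.symm).symm

theorem union_union (h : IsSeparation G A B) (K : Set V) : IsSeparation G (A ∪ K) (B ∪ K) where
  mem_or_mem v := (h.mem_or_mem v).imp .inl .inl
  not_adj _ _ hu hv := h.not_adj (fun hB ↦ hu (.inl hB)) (fun hA ↦ hv (.inl hA))

theorem induce {H : SimpleGraph V} (h : IsSeparation G A B) (hHG : H ≤ G) (Q : Set V) :
    IsSeparation (H.induce Q) (Subtype.val ⁻¹' A) (Subtype.val ⁻¹' B) where
  mem_or_mem v := h.mem_or_mem v
  not_adj _ _ hu hv huv := h.not_adj hu hv (hHG huv)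

theorem ncard_le_add [Finite V] (h : IsSeparation G A B) (Q : Set V) :
    Q.ncard ≤ (A ∩ Q).ncard + (B ∩ Q).ncard := by
  refine (Set.ncard_le_ncard fun v hv ↦ ?_).trans (Set.ncard_union_le _ _)
  exact (h.mem_or_mem v).imp (⟨·, hv⟩) (⟨·, hv⟩)

end IsSeparation

theorem ncard_inter_add_ncard_inter_le [Finite V] (A B C D : Set V) :
    (A ∩ C ∩ (B ∪ D)).ncard + ((A ∪ C) ∩ (B ∩ D)).ncard ≤ (A ∩ B).ncard + (C ∩ D).ncard := by
  rw [← Set.ncard_union_add_ncard_inter, ← Set.ncard_union_add_ncard_inter (A ∩ B)]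
  exact Nat.add_le_add (Set.ncard_le_ncard (by grind)) (Set.ncard_le_ncard (by grind))

/-! ### Menger's theorem -/

/-- A family of pairwise vertex-disjoint paths in `G`, one from each vertex of `S` to a vertex of
`T`. -/
structure Linkage (G : SimpleGraph V) (S T : Set V) where
  target : S → T
  path : ∀ s : S, G.Walk s (target s)
  isPath : ∀ s, (path s).IsPath
  eq_of_mem_support : ∀ ⦃s s' x⦄, x ∈ (path s).support → x ∈ (path s').support → s = s'

namespace Linkage

variable {S T : Set V} (L : Linkage G S T)
include L

theorem eq_of_mem_support_of_mem_source {s : S} {x : V} (hx : x ∈ (L.path s).support)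
    (hxS : x ∈ S) : x = s :=
  congrArg Subtype.val (L.eq_of_mem_support (L.path ⟨x, hxS⟩).start_mem_support hx)

theorem target_injective : Function.Injective L.target := fun s s' h ↦
  L.eq_of_mem_support (L.path s).end_mem_support (by rw [h]; exact (L.path s').end_mem_support)

theorem eq_target_of_mem_support [Finite V] (hST : S.ncard = T.ncard) {s : S} {x : V}
    (hx : x ∈ (L.path s).support) (hxT : x ∈ T) : x = L.target s := by
  have hbij : Function.Bijective L.target :=
    (Nat.bijective_iff_injective_and_card _).2 ⟨L.target_injective, hST⟩
  obtain ⟨s', hs'⟩ := hbij.surjective ⟨x, hxT⟩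
  have hx' : x = L.target s' := by rw [hs']
  obtain rfl : s' = s := L.eq_of_mem_support (hx' ▸ (L.path s').end_mem_support) hx
  exact hx'

end Linkage

theorem exists_walk_iterate {h : V → V} (hadj : ∀ v, h v = v ∨ G.Adj v (h v)) (s : V) (n : ℕ) :
    ∃ p : G.Walk s (h^[n] s), ∀ x ∈ p.support, ∃ i ≤ n, x = h^[i] s := by
  induction n with
  | zero => exact ⟨.nil, by simp⟩
  | succ n ih =>
    obtain ⟨p, hp⟩ := ih
    rw [Function.iterate_succ_apply']
    rcases hadj (h^[n] s) with heq | hadj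
    · rw [heq]
      exact ⟨p, fun x hx ↦ (hp x hx).imp fun i hi ↦ ⟨hi.1.trans n.le_succ, hi.2⟩⟩
    · refine ⟨p.concat hadj, fun x hx ↦ ?_⟩
      rw [SimpleGraph.Walk.support_concat, List.mem_append, List.mem_singleton] at hx
      rcases hx with hx | rfl
      · exact (hp x hx).imp fun i hi ↦ ⟨hi.1.trans n.le_succ, hi.2⟩
      · exact ⟨n + 1, le_rfl, (Function.iterate_succ_apply' h n s).symm⟩

section Orbits

variable {S T : Set V} {h : V → V} (hinj : Set.InjOn h Tᶜ) (hmaps : Set.MapsTo h Tᶜ Sᶜ)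
include hinj hmaps

theorem eq_of_iterate_eq_iterate {s s' : V} (hs : s ∈ S) (hs' : s' ∈ S) {i j : ℕ}
    (hi : ∀ a < i, h^[a] s ∉ T) (hj : ∀ a < j, h^[a] s' ∉ T) (heq : h^[i] s = h^[j] s') :
    i = j ∧ s = s' := by
  induction i generalizing j with
  | zero =>
    cases j with
    | zero => exact ⟨rfl, heq⟩
    | succ j =>
      rw [Function.iterate_succ_apply'] at heq
      exact absurd (heq ▸ hs) (hmaps (hj j j.lt_succ_self))
  | succ i ih =>
    rw [Function.iterate_succ_apply'] at heq
    cases j with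
    | zero => exact absurd (heq ▸ hs') (hmaps (hi i i.lt_succ_self))
    | succ j =>
      rw [Function.iterate_succ_apply'] at heq
      obtain ⟨rfl, rfl⟩ := ih (fun a ha ↦ hi a (by omega)) (fun a ha ↦ hj a (by omega))
        (hinj (hi i i.lt_succ_self) (hj j j.lt_succ_self) heq)
      exact ⟨rfl, rfl⟩

theorem exists_iterate_mem [Finite V] {s : V} (hs : s ∈ S) : ∃ n, h^[n] s ∈ T := by
  by_contra! hnot
  exact not_injective_infinite_finite (fun n ↦ h^[n] s) fun i j hij ↦
    (eq_of_iterate_eq_iterate hinj hmaps hs hs (fun a _ ↦ hnot a) (fun a _ ↦ hnot a) hij).1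

end Orbits

section Menger

variable [Finite V] {S T : Set V}
  (hsep : ∀ A B, IsSeparation G A B → S ⊆ A → T ⊆ B → S.ncard ≤ (A ∩ B).ncard)
include hsep

theorem ncard_le_ncard_setOf_eq_or_adj {W : Set V} (hW : W ⊆ Tᶜ) :
    W.ncard ≤ {u | ∃ v ∈ W, u ∉ S ∧ (u = v ∨ G.Adj v u)}.ncard := by
  set N := {u | ∃ v ∈ W, u ∉ S ∧ (u = v ∨ G.Adj v u)}
  have hWN : W ⊆ N ∪ S := fun v hv ↦
    or_iff_not_imp_right.2 fun hvS ↦ ⟨v, hv, hvS, .inl rfl⟩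
  have hsepN : IsSeparation G (N ∪ S) Wᶜ :=
    ⟨fun v ↦ or_iff_not_imp_right.2 fun hv ↦ hWN (not_not.1 hv), fun u v hu hv huv ↦
      hv (.inl ⟨u, not_not.1 hu, fun hvS ↦ hv (.inr hvS), .inr huv⟩)⟩
  have horder : S.ncard ≤ ((N ∪ S) \ W).ncard :=
    hsep _ _ hsepN Set.subset_union_right (Set.subset_compl_comm.1 hW)
  have := Set.ncard_sdiff_add_ncard_of_subset hWN
  have := Set.ncard_union_le N S
  omega

/- A successor map: by Hall's theorem the vertices outside `T` can be sent injectively to vertices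
outside `S`, each one staying put or moving along an edge. Its orbits from `S` never meet before
reaching `T`, and they do reach `T` by finiteness. -/
theorem exists_injOn_mapsTo_of_forall_isSeparation :
    ∃ h : V → V, Set.InjOn h Tᶜ ∧ Set.MapsTo h Tᶜ Sᶜ ∧ ∀ v, h v = v ∨ G.Adj v (h v) := by
  classical
  have := Fintype.ofFinite V
  let r (v : ↥Tᶜ) (u : V) : Prop := u ∉ S ∧ (u = v ∨ G.Adj v u)
  have hall (W : Finset ↥Tᶜ) : W.card ≤ (Finset.univ.filter fun u ↦ ∃ v ∈ W, r v u).card := by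
    have hcard := ncard_le_ncard_setOf_eq_or_adj hsep (Subtype.coe_image_subset Tᶜ (W : Set ↥Tᶜ))
    simp only [Set.exists_mem_image] at hcard
    rwa [Set.ncard_image_of_injective _ Subtype.val_injective, Set.ncard_coe_finset,
      Set.ncard_eq_toFinset_card', Set.toFinset_ofPred] at hcard
  obtain ⟨g, hg, hgr⟩ := (Fintype.all_card_le_filter_rel_iff_exists_injective r).1 hall
  refine ⟨fun v ↦ if hv : v ∈ Tᶜ then g ⟨v, hv⟩ else v, fun u hu v hv huv ↦ ?_, fun v hv ↦ ?_,
    fun v ↦ ?_⟩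
  · simp only [dif_pos hu, dif_pos hv] at huv
    exact congrArg Subtype.val (hg huv)
  · simp only [dif_pos hv]
    exact (hgr ⟨v, hv⟩).1
  · by_cases hv : v ∈ Tᶜ
    · simp only [dif_pos hv]
      exact (hgr ⟨v, hv⟩).2
    · exact .inl (dif_neg hv)

/-- **Menger's theorem**, with separators presented as separations. -/
theorem nonempty_linkage_of_forall_isSeparation : Nonempty (Linkage G S T) := by
  classical
  obtain ⟨h, hinj, hmaps, hadj⟩ := exists_injOn_mapsTo_of_forall_isSeparation hsep
  have hreach (s : S) : ∃ n, h^[n] s ∈ T := exists_iterate_mem hinj hmaps s.2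
  choose p hp using fun s : S ↦ exists_walk_iterate hadj s (Nat.find (hreach s))
  refine ⟨⟨fun s ↦ ⟨_, Nat.find_spec (hreach s)⟩, fun s ↦ (p s).bypass,
    fun s ↦ (p s).bypass_isPath, fun s s' x hx hx' ↦ ?_⟩⟩
  obtain ⟨i, hi, hxi⟩ := hp s x ((p s).support_bypass_subset_support hx)
  obtain ⟨j, hj, hxj⟩ := hp s' x ((p s').support_bypass_subset_support hx')
  exact Subtype.ext (eq_of_iterate_eq_iterate hinj hmaps s.2 s'.2
    (fun a ha ↦ Nat.find_min (hreach s) (ha.trans_le hi))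
    (fun a ha ↦ Nat.find_min (hreach s') (ha.trans_le hj)) (hxi.symm.trans hxj)).2

end Menger
/-! ### Well-linked sets -/

theorem wellLinked_of_nonempty_linkage [Finite V] {I : Set V}
    (hlink : ∀ S T, S ⊆ I → T ⊆ I → S.ncard = T.ncard → Nonempty (Linkage G S T)) :
    WellLinked G I := by
  intro A' A'' hA' hA'' _ hcard
  -- The other vertices `R` of `I` start paths of their own, which keeps them off the wanted paths.
  set R := I \ (A' ∪ A'')
  have hA'R : Disjoint A' R := Set.disjoint_left.2 fun x hx hxR ↦ hxR.2 (.inl hx)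
  have hA''R : Disjoint A'' R := Set.disjoint_left.2 fun x hx hxR ↦ hxR.2 (.inr hx)
  have hST : (A' ∪ R).ncard = (A'' ∪ R).ncard := by
    rw [Set.ncard_union_eq hA'R, Set.ncard_union_eq hA''R]
    exact congrArg (· + R.ncard) hcard
  obtain ⟨L⟩ := hlink _ _ (Set.union_subset hA' Set.sdiff_subset)
    (Set.union_subset hA'' Set.sdiff_subset) hST
  let source : A' → ↥(A' ∪ R) := Set.inclusion Set.subset_union_left
  have hsource : Function.Injective source := Set.inclusion_injective Set.subset_union_left
  have htarget (a : A') : (L.target (source a)).1 ∈ A'' := by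
    refine (L.target (source a)).2.resolve_right fun hmem ↦ ?_
    have heq := L.eq_of_mem_support_of_mem_source (L.path (source a)).end_mem_support (.inr hmem)
    exact Set.disjoint_left.1 hA'R a.2 (heq ▸ hmem)
  let f (a : A') : A'' := ⟨L.target (source a), htarget a⟩
  have hf : Function.Injective f := fun a b hab ↦ by
    have htarget_eq : (L.target (source a)).1 = (L.target (source b)).1 :=
      (Subtype.ext_iff.1 hab :)
    exact hsource (L.target_injective (Subtype.ext htarget_eq))
  refine ⟨f, (Nat.bijective_iff_injective_and_card f).2 ⟨hf, hcard⟩, fun a ↦ L.path (source a),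
    fun a ↦ L.isPath _, fun a b hab x hxa hxb ↦ ?_, fun a x hx hxI ↦ ?_⟩
  · exact hab (hsource (L.eq_of_mem_support hxa hxb))
  · by_cases hxS : x ∈ A' ∪ R
    · exact .inl (L.eq_of_mem_support_of_mem_source hx hxS)
    · exact .inr (L.eq_target_of_mem_support hST hx (by grind))

theorem wellLinked_empty (G : SimpleGraph V) : WellLinked G ∅ := by
  intro A' A'' hA' hA'' _ _
  obtain rfl := Set.subset_empty_iff.1 hA'
  obtain rfl := Set.subset_empty_iff.1 hA''
  exact ⟨id, Function.bijective_id, fun a ↦ a.2.elim, fun a ↦ a.2.elim, fun a ↦ a.2.elim,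
    fun a ↦ a.2.elim⟩

theorem wellLinked_pair {a b : V} (hab : G.Reachable a b) : WellLinked G {a, b} := by
  intro A' A'' hA' hA'' hdisj hcard
  obtain ⟨e⟩ : Nonempty (A' ≃ A'') :=
    have : Finite A' := (Set.toFinite {a, b}).subset hA'
    have : Finite A'' := (Set.toFinite {a, b}).subset hA''
    Finite.card_eq.1 hcard
  have hne (x : A') (y : A'') : x.1 ≠ y.1 := hdisj.ne_of_mem x.2 y.2
  have hreach (x : A') : G.Reachable x (e x) := by
    rcases hA' x.2 with hx | hx <;> rcases hA'' (e x).2 with hy | hy <;> rw [hx, hy]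
    exacts [hab, hab.symm]
  have hpair (x : A') {z : V} (hz : z ∈ ({a, b} : Set V)) : z = x ∨ z = e x := by
    have := hne x (e x)
    have := hA' x.2
    have := hA'' (e x).2
    grind
  classical
  refine ⟨e, e.bijective, fun x ↦ (hreach x).some.bypass, fun x ↦ SimpleGraph.Walk.bypass_isPath _,
    fun x y hxy ↦ ?_, fun x z _ hz ↦ hpair x hz⟩
  rcases hpair x (hA' y.2) with hyx | hyx
  · exact absurd (Subtype.ext hyx.symm) hxy
  · exact absurd hyx (hne y (e x))

/-! ### Tangles -/

/-- A tangle of order `θ`: a choice of a small side for every separation of order less than `θ`,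
`small A B` meaning that `A` is the small side of `(A, B)`, such that no three small sides cover
the graph. Only the vertices are required not to be covered, so this is stronger than the usual
condition, which also counts edges. -/
structure Tangle (G : SimpleGraph V) (θ : ℕ) where
  small : Set V → Set V → Prop
  isSeparation : ∀ {A B}, small A B → IsSeparation G A B
  ncard_lt : ∀ {A B}, small A B → (A ∩ B).ncard < θ
  small_or_small : ∀ {A B}, IsSeparation G A B → (A ∩ B).ncard < θ → small A B ∨ small B A
  union_ne_univ : ∀ {A₁ B₁ A₂ B₂ A₃ B₃}, small A₁ B₁ → small A₂ B₂ → small A₃ B₃ →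
    A₁ ∪ A₂ ∪ A₃ ≠ Set.univ

namespace Tangle

variable {θ : ℕ} {T : Tangle G θ}

theorem small_of_union_eq_univ {A B C D E F : Set V} (hAB : T.small A B) (hCD : T.small C D)
    (hEF : IsSeparation G E F) (horder : (E ∩ F).ncard < θ) (hcover : A ∪ C ∪ F = Set.univ) :
    T.small E F :=
  (T.small_or_small hEF horder).resolve_right fun hFE ↦ T.union_ne_univ hAB hCD hFE hcover

theorem small_univ_right [Finite V] (T : Tangle G θ) {A : Set V} (hA : A.ncard < θ) :
    T.small A Set.univ := by
  rcases T.small_or_small (.univ_right G A) (by rwa [Set.inter_univ]) with h | h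
  · exact h
  · exact absurd (by simp) (T.union_ne_univ h h h)

/-- Independence in the tangle matroid, the matroid of rank at most `θ` attached to `T`. -/
structure Indep (T : Tangle G θ) (I : Set V) : Prop where
  ncard_le : I.ncard ≤ θ
  ncard_le_of_small : ∀ {A B}, T.small A B → I ⊆ A → I.ncard ≤ (A ∩ B).ncard

theorem indep_empty (T : Tangle G θ) : T.Indep ∅ := ⟨by simp, by simp⟩

namespace Indep

variable [Finite V] {I J U : Set V}

theorem subset (hI : T.Indep I) (hJI : J ⊆ I) : T.Indep J := by
  refine ⟨(Set.ncard_le_ncard hJI).trans hI.ncard_le, fun {A B} hAB hJA ↦ ?_⟩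
  by_contra! hlt
  set K := I \ J
  have hK : K.ncard + J.ncard = I.ncard := Set.ncard_sdiff_add_ncard_of_subset hJI
  have horder : ((A ∪ K) ∩ (B ∪ K)).ncard < I.ncard := by
    rw [← Set.inter_union_distrib_right]
    have := Set.ncard_union_le (A ∩ B) K
    omega
  have hsmall : T.small (A ∪ K) (B ∪ K) := by
    have hsep := T.isSeparation hAB
    refine small_of_union_eq_univ hAB hAB (hsep.union_union K) (horder.trans_le hI.ncard_le) ?_
    refine Set.eq_univ_of_forall fun v ↦ ?_
    have := hsep.mem_or_mem v
    grind
  exact horder.not_ge (hI.ncard_le_of_small hsmall (by grind))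

theorem small_union {A B C D : Set V} (hI : T.Indep I) (hIθ : I.ncard < θ) (hAB : T.small A B)
    (hCD : T.small C D) (hIA : I ⊆ A) (hIC : I ⊆ C) (hABI : (A ∩ B).ncard ≤ I.ncard)
    (hCDI : (C ∩ D).ncard ≤ I.ncard) :
    T.small (A ∪ C) (B ∩ D) ∧ ((A ∪ C) ∩ (B ∩ D)).ncard ≤ I.ncard := by
  have hsepAB := T.isSeparation hAB
  have hsepCD := T.isSeparation hCD
  have hcorner : I.ncard ≤ (A ∩ C ∩ (B ∪ D)).ncard := by
    by_contra! hlt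
    have hsmall : T.small (A ∩ C) (B ∪ D) :=
      small_of_union_eq_univ hAB hCD (hsepAB.inter_union hsepCD) (hlt.trans hIθ)
        (Set.eq_univ_of_forall fun v ↦ by have := hsepAB.mem_or_mem v; grind)
    exact hlt.not_ge (hI.ncard_le_of_small hsmall (Set.subset_inter hIA hIC))
  have horder : ((A ∪ C) ∩ (B ∩ D)).ncard ≤ I.ncard := by
    have := ncard_inter_add_ncard_inter_le A B C D
    omega
  refine ⟨small_of_union_eq_univ hAB hCD (hsepAB.union_inter hsepCD) (horder.trans_lt hIθ) ?_,
    horder⟩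
  refine Set.eq_univ_of_forall fun v ↦ ?_
  have := hsepAB.mem_or_mem v
  have := hsepCD.mem_or_mem v
  grind

theorem exists_insert (hI : T.Indep I) (hIθ : I.ncard < θ)
    (hU : ∀ {A B}, T.small A B → ¬ U ⊆ A) : ∃ u ∈ U, u ∉ I ∧ T.Indep (insert u I) := by
  by_contra! hdep
  let tight : Set (Set V) := {A | ∃ B, T.small A B ∧ I ⊆ A ∧ (A ∩ B).ncard ≤ I.ncard}
  have htight_union {A C : Set V} : A ∈ tight → C ∈ tight → A ∪ C ∈ tight := by
    rintro ⟨B, hAB, hIA, hABI⟩ ⟨D, hCD, hIC, hCDI⟩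
    obtain ⟨hsmall, horder⟩ := hI.small_union hIθ hAB hCD hIA hIC hABI hCDI
    exact ⟨_, hsmall, hIA.trans Set.subset_union_left, horder⟩
  have htight_mem (u : V) (hu : u ∈ U) (huI : u ∉ I) : ∃ C ∈ tight, u ∈ C := by
    have hcard : (insert u I).ncard = I.ncard + 1 := Set.ncard_insert_of_notMem huI
    by_contra! hnot
    refine hdep u hu huI ⟨by omega, fun {C D} hCD hC ↦ ?_⟩
    by_contra! hlt
    obtain ⟨huC, hIC⟩ := Set.insert_subset_iff.1 hC
    exact hnot C ⟨D, hCD, hIC, by omega⟩ huC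
  have hI_tight : I ∈ tight := ⟨Set.univ, T.small_univ_right hIθ, subset_rfl, by simp⟩
  obtain ⟨A, hIA, hA⟩ := (Set.toFinite tight).exists_le_maximal hI_tight
  obtain ⟨B, hAB, -⟩ := hA.prop
  refine hU hAB fun u hu ↦ ?_
  by_cases huI : u ∈ I
  · exact hIA huI
  · obtain ⟨C, hC, huC⟩ := htight_mem u hu huI
    exact hA.le_of_ge (htight_union hA.prop hC) Set.subset_union_left (.inr huC)

theorem exists_union (hI : T.Indep I) (hU : ∀ {A B}, T.small A B → ¬ U ⊆ A) (m : ℕ)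
    (hm : I.ncard + m ≤ θ) : ∃ J ⊆ U, J.ncard = m ∧ T.Indep (I ∪ J) := by
  induction m with
  | zero => exact ⟨∅, Set.empty_subset U, Set.ncard_empty V, by rwa [Set.union_empty]⟩
  | succ m ih =>
    obtain ⟨J, hJU, rfl, hIJ⟩ := ih (by omega)
    obtain ⟨u, hu, huIJ, hins⟩ :=
      hIJ.exists_insert ((Set.ncard_union_le I J).trans_lt (by omega)) hU
    refine ⟨insert u J, Set.insert_subset hu hJU,
      Set.ncard_insert_of_notMem fun huJ ↦ huIJ (.inr huJ), ?_⟩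
    rwa [Set.union_insert]

theorem wellLinked (hI : T.Indep I) : WellLinked G I := by
  refine wellLinked_of_nonempty_linkage fun S S' hS hS' hcard ↦
    nonempty_linkage_of_forall_isSeparation fun A B hsep hSA hSB ↦ ?_
  by_contra! hlt
  have hθ : (A ∩ B).ncard < θ := hlt.trans_le (hI.subset hS).ncard_le
  rcases T.small_or_small hsep hθ with hsmall | hsmall
  · exact hlt.not_ge ((hI.subset hS).ncard_le_of_small hsmall hSA)
  · have := (hI.subset hS').ncard_le_of_small hsmall hSB
    rw [Set.inter_comm] at this
    omega

end Indep

theorem exists_wellLinked_union [Finite V] (T : Tangle G θ) {U U' : Set V}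
    (hU : ∀ {A B}, T.small A B → ¬ U ⊆ A) (hU' : ∀ {A B}, T.small A B → ¬ U' ⊆ A) {m : ℕ}
    (hm : 2 * m ≤ θ) :
    ∃ J ⊆ U, ∃ K ⊆ U', J.ncard = m ∧ K.ncard = m ∧ WellLinked G (J ∪ K) := by
  obtain ⟨J, hJU, hJ, hJ_indep⟩ := T.indep_empty.exists_union hU m (by simp; omega)
  rw [Set.empty_union] at hJ_indep
  obtain ⟨K, hKU', hK, hJK⟩ := hJ_indep.exists_union hU' m (by omega)
  exact ⟨J, hJU, K, hKU', hJ, hK, hJK.wellLinked⟩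

/-- The tangle of a vertex set `Q` that no separation of order less than `θ` splits evenly: the
small sides are those holding less than a third of `Q`. -/
def ofSet [Finite V] (Q : Set V) (hQ : ∀ A B, IsSeparation G A B → (A ∩ B).ncard < θ →
    3 * (A ∩ Q).ncard < Q.ncard ∨ 3 * (B ∩ Q).ncard < Q.ncard) : Tangle G θ where
  small A B := IsSeparation G A B ∧ (A ∩ B).ncard < θ ∧ 3 * (A ∩ Q).ncard < Q.ncard
  isSeparation h := h.1
  ncard_lt h := h.2.1
  small_or_small {A B} hsep horder :=
    (hQ A B hsep horder).imp (⟨hsep, horder, ·⟩) (⟨hsep.symm, Set.inter_comm A B ▸ horder, ·⟩)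
  union_ne_univ {A₁ _ A₂ _ A₃ _} h₁ h₂ h₃ hcover := by
    have hQ_eq : Q = A₁ ∩ Q ∪ A₂ ∩ Q ∪ A₃ ∩ Q := by
      rw [← Set.union_inter_distrib_right, ← Set.union_inter_distrib_right, hcover, Set.univ_inter]
    have hle := Set.ncard_union_le (A₁ ∩ Q ∪ A₂ ∩ Q) (A₃ ∩ Q)
    rw [← hQ_eq] at hle
    have := Set.ncard_union_le (A₁ ∩ Q) (A₂ ∩ Q)
    omega

end Tangle

/-! ### Expanders -/

theorem cutCard_le_of_forall_mem [Finite V] {d : ℕ} (hdeg : DegLE G d) {Y Z X : Set V}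
    (hX : ∀ u ∈ Y, ∀ v ∈ Z, G.Adj u v → v ∈ X) : cutCard G Y Z ≤ d * X.ncard := by
  have := Fintype.ofFinite X
  let endpoints (p : {p : V × V // p.1 ∈ Y ∧ p.2 ∈ Z ∧ G.Adj p.1 p.2}) :
      (v : X) × {u : V | G.Adj v u} :=
    ⟨⟨p.1.2, hX _ p.2.1 _ p.2.2.1 p.2.2.2⟩, p.1.1, p.2.2.2.symm⟩
  have hinj : Function.Injective endpoints := by
    rintro ⟨⟨u, v⟩, huv⟩ ⟨⟨u', v'⟩, huv'⟩ h
    simp only [endpoints, Sigma.mk.injEq, Subtype.mk.injEq] at h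
    obtain ⟨rfl, h⟩ := h
    simpa using h
  calc cutCard G Y Z ≤ Nat.card ((v : X) × {u : V | G.Adj v u}) :=
        Nat.card_le_card_of_injective endpoints hinj
    _ = ∑ v : X, Nat.card {u : V | G.Adj v u} := Nat.card_sigma
    _ ≤ ∑ _v : X, d := Finset.sum_le_sum fun v _ ↦ hdeg v
    _ = d * X.ncard := by
        rw [Finset.sum_const, Finset.card_univ, ← Nat.card_eq_fintype_card,
          Nat.card_coe_set_eq, smul_eq_mul, mul_comm]

theorem DegLE.induce [Finite V] {H : SimpleGraph V} {d : ℕ} (hdeg : DegLE G d) (hHG : H ≤ G)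
    (Q : Set V) : DegLE (H.induce Q) d := fun v ↦
  (Nat.card_le_card_of_injective
    (fun w ↦ ⟨w.1, hHG w.2⟩ : {w : Q | (H.induce Q).Adj v w} → {w : V | G.Adj v w})
    fun _ _ h ↦ Subtype.ext (Subtype.ext (congrArg Subtype.val h :))).trans (hdeg v)

namespace IsExpander

variable {α : ℝ} {d : ℕ}

theorem mul_min_ncard_le_cutCard (hexp : IsExpander G α) (A : Set V) :
    α * min (A.ncard : ℝ) Aᶜ.ncard ≤ cutCard G A Aᶜ := by
  rcases A.eq_empty_or_nonempty with rfl | hA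
  · simp
  rcases Aᶜ.eq_empty_or_nonempty with hA' | hA'
  · simp [hA']
  · exact hexp A hA hA'

theorem le_of_degLE [Finite V] [Nontrivial V] (hexp : IsExpander G α) (hdeg : DegLE G d) :
    α ≤ d := by
  obtain ⟨v⟩ := ‹Nontrivial V›.to_nonempty
  have hcut : cutCard G {v}ᶜ {v} ≤ d := by
    simpa using cutCard_le_of_forall_mem hdeg (fun u _ w (hw : w ∈ ({v} : Set V)) _ ↦ hw)
  have hpos : 1 ≤ ({v}ᶜ : Set V).ncard :=
    (Set.ncard_pos).2 (exists_ne v)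
  calc α = α * min (({v}ᶜ : Set V).ncard : ℝ) ({v}ᶜᶜ : Set V).ncard := by
        simp [hpos]
    _ ≤ cutCard G {v}ᶜ {v}ᶜᶜ := hexp.mul_min_ncard_le_cutCard _
    _ ≤ d := by rw [compl_compl]; exact_mod_cast hcut

theorem mul_min_ncard_le_of_isSeparation [Finite V] (hα : 0 ≤ α) (hexp : IsExpander G α)
    (hdeg : DegLE G d) {A B : Set V} (hsep : IsSeparation G A B) :
    α * min (A.ncard : ℝ) B.ncard ≤ (α + d) * (A ∩ B).ncard := by
  have hcut : cutCard G Bᶜ B ≤ d * (A ∩ B).ncard :=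
    cutCard_le_of_forall_mem hdeg fun u hu v hv huv ↦
      ⟨by_contra fun hvA ↦ hsep.not_adj hu hvA huv, hv⟩
  have hexpB : α * min (Bᶜ.ncard : ℝ) B.ncard ≤ d * (A ∩ B).ncard := by
    have := hexp.mul_min_ncard_le_cutCard Bᶜ
    rw [compl_compl] at this
    exact this.trans (by exact_mod_cast hcut)
  have hA : A.ncard ≤ Bᶜ.ncard + (A ∩ B).ncard := by
    refine (Set.ncard_le_ncard fun v hv ↦ ?_).trans (Set.ncard_union_le _ _)
    exact (em (v ∈ B)).symm.imp id (⟨hv, ·⟩)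
  have hmin : min (A.ncard : ℝ) B.ncard ≤ min (Bᶜ.ncard : ℝ) B.ncard + (A ∩ B).ncard := by
    rw [← min_add_add_right]
    exact min_le_min (by exact_mod_cast hA) (by simp)
  calc α * min (A.ncard : ℝ) B.ncard
      ≤ α * (min (Bᶜ.ncard : ℝ) B.ncard + (A ∩ B).ncard) := by gcongr
    _ ≤ (α + d) * (A ∩ B).ncard := by linarith

end IsExpander

/-! ### Path-of-Sets Systems -/

theorem iff_of_forall_iff_succ {ℓ : ℕ} {p : Fin ℓ → Prop}
    (h : ∀ (i : Fin ℓ) (hi : (i : ℕ) + 1 < ℓ), p i ↔ p ⟨i + 1, hi⟩) (i j : Fin ℓ) : p i ↔ p j := by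
  suffices hzero : ∀ n (hn : n < ℓ), p ⟨n, hn⟩ ↔ p ⟨0, by omega⟩ from
    (hzero i i.2).trans (hzero j j.2).symm
  intro n hn
  induction n with
  | zero => rfl
  | succ n ih => exact (h ⟨n, by omega⟩ hn).symm.trans (ih (by omega))

namespace PathOfSets

section Graph

variable {V : Type} {ℓ w : ℕ} (P : PathOfSets V ℓ w)

theorem S_le_graph (i : Fin ℓ) : P.S i ≤ P.graph :=
  le_sup_of_le_left (le_iSup P.S i)

theorem adj_of_mem_M {i : Fin ℓ} {b a : V} (h : (b, a) ∈ P.M i) : P.graph.Adj b a := by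
  obtain ⟨hi, hb, ha⟩ := P.M_mem i _ h
  have hne : b ≠ a :=
    (P.VS_disj i ⟨i + 1, hi⟩ (by simp [Fin.ext_iff])).ne_of_mem (P.B_sub _ hb) (P.A_sub _ ha)
  exact .inr ⟨hne, .inl ⟨i, h⟩⟩

theorem A_nonempty (hw : 0 < w) (i : Fin ℓ) : (P.A i).Nonempty :=
  Set.nonempty_of_ncard_ne_zero ((P.A_card i).trans_ne hw.ne')

theorem B_nonempty (hw : 0 < w) (i : Fin ℓ) : (P.B i).Nonempty :=
  Set.nonempty_of_ncard_ne_zero ((P.B_card i).trans_ne hw.ne')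

theorem reachable_of_mem_VS {i : Fin ℓ} {x y : V} (hx : x ∈ P.VS i) (hy : y ∈ P.VS i) :
    P.graph.Reachable x y :=
  (((P.S_conn i).preconnected ⟨x, hx⟩ ⟨y, hy⟩).map (SimpleGraph.Embedding.induce _).toHom).mono
    (P.S_le_graph i)

theorem reachable (hw : 0 < w) {i j : Fin ℓ} {x y : V} (hx : x ∈ P.VS i) (hy : y ∈ P.VS j) :
    P.graph.Reachable x y := by
  let p (k : Fin ℓ) : Prop := ∀ z ∈ P.VS k, P.graph.Reachable x z
  refine (iff_of_forall_iff_succ (p := p) (fun k hk ↦ ?_) i j).1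
    (fun z hz ↦ P.reachable_of_mem_VS hx hz) y hy
  obtain ⟨b, hb⟩ := P.B_nonempty hw k
  obtain ⟨a, hba, -⟩ := P.M_match₁ k hk b hb
  have hbV := P.B_sub k hb
  obtain ⟨_, -, ha⟩ := P.M_mem k _ hba
  have haV := P.A_sub _ ha
  have hadj := (P.adj_of_mem_M hba).reachable
  exact ⟨fun h z hz ↦ ((h b hbV).trans hadj).trans (P.reachable_of_mem_VS haV hz),
    fun h z hz ↦ ((h a haV).trans hadj.symm).trans (P.reachable_of_mem_VS hbV hz)⟩

end Graph

variable {V : Type} [Finite V] {ℓ w d : ℕ} {α : ℝ} (P : PathOfSets V ℓ w)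

theorem two_mul_le_ncard_VS (i : Fin ℓ) : 2 * w ≤ (P.VS i).ncard := by
  have hunion := Set.ncard_union_eq (P.AB_disj i)
  have hle := Set.ncard_le_ncard (Set.union_subset (P.A_sub i) (P.B_sub i))
  have hA : (P.A i).ncard = w := P.A_card i
  have hB : (P.B i).ncard = w := P.B_card i
  omega

theorem le_ncard_inter_add_ncard_inter_succ {X Y : Set V} (hsep : IsSeparation P.graph X Y)
    (i : Fin ℓ) (hi : (i : ℕ) + 1 < ℓ) :
    w ≤ (X ∩ P.VS i).ncard + (Y ∩ P.VS ⟨i + 1, hi⟩).ncard := by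
  choose! partner hpartner _ using P.M_match₁ i hi
  have hmaps : ∀ b ∈ P.B i \ X, partner b ∈ Y ∩ P.VS ⟨i + 1, hi⟩ := fun b hb ↦ by
    obtain ⟨_, -, ha⟩ := P.M_mem i _ (hpartner b hb.1)
    exact ⟨by_contra fun hY ↦ hsep.symm.not_adj hb.2 hY (P.adj_of_mem_M (hpartner b hb.1)),
      P.A_sub _ ha⟩
  have hinj : Set.InjOn partner (P.B i \ X) := fun b hb b' hb' heq ↦ by
    obtain ⟨_, -, ha⟩ := P.M_mem i _ (hpartner b hb.1)
    exact (P.M_match₂ i hi _ ha).unique (hpartner b hb.1) (heq ▸ hpartner b' hb'.1)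
  calc w = (P.B i ∩ X).ncard + (P.B i \ X).ncard := by
        rw [Set.ncard_inter_add_ncard_sdiff_eq_ncard]
        exact (P.B_card i).symm
    _ ≤ (X ∩ P.VS i).ncard + (Y ∩ P.VS ⟨i + 1, hi⟩).ncard :=
        Nat.add_le_add (Set.ncard_le_ncard fun b hb ↦ ⟨hb.2, P.B_sub i hb.1⟩)
          (Set.ncard_le_ncard_of_injOn partner hmaps hinj)

theorem le_of_degLE {i : Fin ℓ} (hw : 0 < w)
    (hexp : IsExpander ((P.S i).induce (P.VS i)) α) (hdeg : DegLE P.graph d) : α ≤ d := by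
  have : Nontrivial (P.VS i) := by
    rw [Set.nontrivial_coe_sort, ← Set.one_lt_ncard_iff_nontrivial]
    have := P.two_mul_le_ncard_VS i
    omega
  exact hexp.le_of_degLE (hdeg.induce (P.S_le_graph i) _)

theorem mul_min_ncard_inter_le {i : Fin ℓ} (hα : 0 ≤ α) (hw : 0 < w)
    (hexp : IsExpander ((P.S i).induce (P.VS i)) α) (hdeg : DegLE P.graph d) {X Y : Set V}
    (hsep : IsSeparation P.graph X Y) :
    α * min ((X ∩ P.VS i).ncard : ℝ) (Y ∩ P.VS i).ncard ≤ 2 * d * (X ∩ Y).ncard := by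
  have hncard (Z : Set V) : (Subtype.val ⁻¹' Z : Set (P.VS i)).ncard = (Z ∩ P.VS i).ncard := by
    rw [← Set.ncard_image_of_injective _ Subtype.val_injective, Subtype.image_preimage_coe,
      Set.inter_comm]
  have hcluster := hexp.mul_min_ncard_le_of_isSeparation hα (hdeg.induce (P.S_le_graph i) _)
    (hsep.induce (P.S_le_graph i) _)
  rw [← Set.preimage_inter, hncard, hncard, hncard] at hcluster
  have hαd : α ≤ d := P.le_of_degLE hw hexp hdeg
  calc _ ≤ (α + d) * ((X ∩ Y ∩ P.VS i).ncard : ℝ) := hcluster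
    _ ≤ (d + d) * ((X ∩ Y).ncard : ℝ) := by
        refine mul_le_mul (by linarith) ?_ (Nat.cast_nonneg _) (by positivity)
        exact_mod_cast Set.ncard_le_ncard Set.inter_subset_left
    _ = 2 * d * (X ∩ Y).ncard := by ring

section Orientation

variable (hα : 0 < α) (hw : 0 < w) (hexp : ∀ i, IsExpander ((P.S i).induce (P.VS i)) α)
  (hdeg : DegLE P.graph d) {X Y : Set V} (hsep : IsSeparation P.graph X Y)
  (horder : 4 * d * (X ∩ Y).ncard < α * w)
include hα hw hexp hdeg hsep horder

theorem two_mul_ncard_inter_lt_or (i : Fin ℓ) :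
    2 * (X ∩ P.VS i).ncard < w ∨ 2 * (Y ∩ P.VS i).ncard < w := by
  have hmin := P.mul_min_ncard_inter_le hα.le hw (hexp i) hdeg hsep
  have hlt : min ((X ∩ P.VS i).ncard : ℝ) (Y ∩ P.VS i).ncard < w / 2 :=
    lt_of_mul_lt_mul_left (by linarith) hα.le
  rw [min_lt_iff, lt_div_iff₀' two_pos, lt_div_iff₀' two_pos] at hlt
  exact_mod_cast hlt

theorem two_mul_ncard_inter_lt_iff (i j : Fin ℓ) :
    2 * (X ∩ P.VS i).ncard < w ↔ 2 * (X ∩ P.VS j).ncard < w := by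
  refine iff_of_forall_iff_succ (p := fun k ↦ 2 * (X ∩ P.VS k).ncard < w) (fun k hk ↦ ?_) i j
  have := P.two_mul_ncard_inter_lt_or hα hw hexp hdeg hsep horder k
  have := P.two_mul_ncard_inter_lt_or hα hw hexp hdeg hsep horder ⟨k + 1, hk⟩
  have := P.le_ncard_inter_add_ncard_inter_succ hsep k hk
  have := P.le_ncard_inter_add_ncard_inter_succ hsep.symm k hk
  omega

end Orientation

theorem exists_wellLinked_union (hα : 0 < α) (hw : 0 < w)
    (hexp : ∀ i, IsExpander ((P.S i).induce (P.VS i)) α) (hdeg : DegLE P.graph d)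
    (i j : Fin ℓ) {m : ℕ} (hm : 8 * d * m ≤ α * w) :
    ∃ J ⊆ P.A i, ∃ K ⊆ P.B j, J.ncard = m ∧ K.ncard = m ∧ WellLinked P.graph (J ∪ K) := by
  have hd : (0 : ℝ) < d := hα.trans_le (P.le_of_degLE hw (hexp i) hdeg)
  have horder {X Y : Set V} (h : (X ∩ Y).ncard < 2 * m) : 4 * d * (X ∩ Y).ncard < α * w := by
    have h' : ((X ∩ Y).ncard : ℝ) < 2 * m := by exact_mod_cast h
    nlinarith
  have hVS := P.two_mul_le_ncard_VS i
  let T : Tangle P.graph (2 * m) := .ofSet (P.VS i) fun X Y hsep h ↦ by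
    have := P.two_mul_ncard_inter_lt_or hα hw hexp hdeg hsep (horder h) i
    omega
  have hsmall {X Y : Set V} (hXY : T.small X Y) (k : Fin ℓ) : 2 * (X ∩ P.VS k).ncard < w := by
    obtain ⟨hsep, hlt, hthird⟩ := hXY
    refine (P.two_mul_ncard_inter_lt_iff hα hw hexp hdeg hsep (horder hlt) i k).1 ?_
    have := P.two_mul_ncard_inter_lt_or hα hw hexp hdeg hsep (horder hlt) i
    have := hsep.ncard_le_add (P.VS i)
    omega
  have hnot_subset {U : Set V} {k : Fin ℓ} (hU : U ⊆ P.VS k) (hUw : U.ncard = w) {X Y : Set V}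
      (hXY : T.small X Y) : ¬ U ⊆ X := fun hUX ↦ by
    have := Set.ncard_le_ncard (Set.subset_inter hUX hU)
    have := hsmall hXY k
    omega
  exact T.exists_wellLinked_union (hnot_subset (P.A_sub i) (P.A_card i))
    (hnot_subset (P.B_sub j) (P.B_card j)) le_rfl

end PathOfSets

theorem expanding_pos_gives_well_linked_general {V : Type} [Finite V] {ℓ w d : ℕ} {α : ℝ}
    (hα : 0 < α) (P : PathOfSets V ℓ w) (hexp : ∀ i, IsExpander ((P.S i).induce (P.VS i)) α)
    (hdeg : DegLE P.graph d) (i j : Fin ℓ) :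
    ∃ J ⊆ P.A i, ∃ K ⊆ P.B j, α * w / (16 * d) ≤ J.ncard ∧ α * w / (16 * d) ≤ K.ncard ∧
      WellLinked P.graph (J ∪ K) := by
  rcases w.eq_zero_or_pos with rfl | hw
  · exact ⟨∅, Set.empty_subset _, ∅, Set.empty_subset _, by simp, by simp,
      by rw [Set.union_empty]; exact wellLinked_empty _⟩
  have hd : (0 : ℝ) < d := hα.trans_le (P.le_of_degLE hw (hexp i) hdeg)
  have hhalf : α * w / (16 * d) = α * w / (8 * d) / 2 := by ring
  rcases le_or_gt 1 (α * w / (8 * d)) with hone | hone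
  · have hfloor : α * w / (16 * d) ≤ ⌊α * w / (8 * d)⌋₊ :=
      hhalf.trans_le (Nat.div_two_lt_floor hone).le
    have hm : 8 * d * (⌊α * w / (8 * d)⌋₊ : ℝ) ≤ α * w :=
      (le_div_iff₀' (by positivity)).1 (Nat.floor_le (zero_le_one.trans hone))
    obtain ⟨J, hJ, K, hK, hJm, hKm, hlinked⟩ :=
      P.exists_wellLinked_union hα hw hexp hdeg i j hm
    exact ⟨J, hJ, K, hK, by rwa [hJm], by rwa [hKm], hlinked⟩
  · obtain ⟨a, ha⟩ := P.A_nonempty hw i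
    obtain ⟨b, hb⟩ := P.B_nonempty hw j
    have hle : α * w / (16 * d) ≤ 1 := by linarith
    refine ⟨{a}, Set.singleton_subset_iff.2 ha, {b}, Set.singleton_subset_iff.2 hb,
      by simpa using hle, by simpa using hle, ?_⟩
    exact wellLinked_pair (P.reachable hw (P.A_sub i ha) (P.B_sub j hb))

/-- Well-linked sets from an expanding Path-of-Sets System of length 3: there is a
universal `c > 0` such that every `α`-expanding Path-of-Sets System of width `w` and
length `3` whose graph has maximum degree at most `d` admits subsets `Â₁ ⊆ A₁`,
`B̂₃ ⊆ B₃` of at least `c·α²·w/d³` vertices each with `Â₁ ∪ B̂₃` well-linked in `G_Σ`. -/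
theorem expanding_pos_gives_well_linked :
    ∃ c : ℝ, 0 < c ∧
      ∀ (V : Type) [Fintype V] (w d : ℕ) (α : ℝ), 0 < α → α < 1 →
        ∀ P : PathOfSets V 3 w,
          (∀ i, IsExpander ((P.S i).induce (P.VS i)) α) →
          DegLE P.graph d →
          ∃ A1 B3 : Set V, A1 ⊆ P.A 0 ∧ B3 ⊆ P.B 2 ∧
            c * α ^ 2 * w / d ^ 3 ≤ (Nat.card ↥A1 : ℝ) ∧
            c * α ^ 2 * w / d ^ 3 ≤ (Nat.card ↥B3 : ℝ) ∧
            WellLinked P.graph (A1 ∪ B3) := by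
  refine ⟨1 / 16, by norm_num, fun V _ w d α hα hα1 P hexp hdeg ↦ ?_⟩
  obtain ⟨J, hJ, K, hK, hJcard, hKcard, hlinked⟩ :=
    expanding_pos_gives_well_linked_general hα P hexp hdeg 0 2
  have hbound : 1 / 16 * α ^ 2 * w / d ^ 3 ≤ α * w / (16 * d) := by
    rcases d.eq_zero_or_pos with rfl | hd
    · simp
    have hd : (1 : ℝ) ≤ d := by exact_mod_cast hd
    calc 1 / 16 * α ^ 2 * w / d ^ 3 ≤ 1 / 16 * α * w / d := by
          gcongr
          · exact pow_le_of_le_one hα.le hα1.le two_ne_zero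
          · exact le_self_pow₀ hd three_ne_zero
      _ = α * w / (16 * d) := by ring
  exact ⟨J, K, hJ, hK, hbound.trans hJcard, hbound.trans hKcard, hlinked⟩
end

section
/- There is a constant c₀ > 0 such that the following holds. Let Π be a Path-of-Expanders System with expansion α and width w whose corresponding graph G_Π has maximum vertex degree at most d and satisfies |V(G_Π)| ≤ n for some n > c₀. Then every graph H with maximum vertex degree at most 3 and |V(H)| ≤ w²·α² / (2¹⁹·d⁴·n·log₂ n) is a minor of G_Π. -/
/-- A Path-of-Expanders System of width `w` and expansion `α`: a Strong Path-of-Sets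
System of length `6` and width `w` (strong: each `A i ∪ B i` is well-linked in the
cluster `S i`), together with six further pairwise disjoint connected `α`-expanders
`T i` (on vertex sets `TV i`, disjoint from all clusters), sets `Ct i ⊆ TV i` of `w`
vertices, and perfect matchings `M' i` between `B i` and `Ct i`. The ambient vertex type
consists exactly of the vertices of the system. -/
structure PathOfExpanders (V : Type) (w : ℕ) (α : ℝ) extends PathOfSets V 6 w where
  strong : ∀ i, WellLinked (S i) (A i ∪ B i)
  TV : Fin 6 → Set V
  T : Fin 6 → SimpleGraph V
  TV_disj : ∀ i j, i ≠ j → Disjoint (TV i) (TV j)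
  TV_VS_disj : ∀ i j, Disjoint (TV i) (VS j)
  T_supp : ∀ i u v, (T i).Adj u v → u ∈ TV i ∧ v ∈ TV i
  T_conn : ∀ i, ((T i).induce (TV i)).Connected
  T_exp : ∀ i, IsExpander ((T i).induce (TV i)) α
  Ct : Fin 6 → Set V
  Ct_sub : ∀ i, Ct i ⊆ TV i
  Ct_card : ∀ i, Nat.card ↥(Ct i) = w
  M' : Fin 6 → Set (V × V)
  M'_mem : ∀ i p, p ∈ M' i → p.1 ∈ B i ∧ p.2 ∈ Ct i
  M'_match₁ : ∀ i, ∀ b ∈ B i, ∃! c : V, (b, c) ∈ M' i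
  M'_match₂ : ∀ i, ∀ c ∈ Ct i, ∃! b : V, (b, c) ∈ M' i
  cover : (⋃ i, VS i) ∪ (⋃ i, TV i) = (Set.univ : Set V)

/-- The graph `G_Π` corresponding to a Path-of-Expanders System: the union of `G_Σ`,
the expanders `T₁,…,T₆`, and all matching edges of `M'`. -/
def PathOfExpanders.graph {V : Type} {w : ℕ} {α : ℝ} (P : PathOfExpanders V w α) :
    SimpleGraph V :=
  P.toPathOfSets.graph ⊔ (⨆ i, P.T i) ⊔
    SimpleGraph.fromRel (fun u v => ∃ i, (u, v) ∈ P.M' i)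

/-!
The minor is found inside the single expander `T₀`, which has at least `w` vertices. Vertices of `H`
are embedded greedily as branch sets of `O(d log n / α)` vertices, and along the way one discards
a set `D` of vertices sending few edges into the remaining free vertices; expansion keeps `D` small.
Take a stage that maximises `2|D|` plus the total size of the branch sets. Nothing further can be
discarded, so the free vertices induce an `α / 4`-expander, hence a graph of logarithmic diameter,
and every branch set has a free neighbour. If some vertex of `H` were still missing, its embedded
neighbours could be linked to each other through the free vertices by a short tree, which would be a
new branch set contradicting maximality.
-/

open scoped SimpleGraph

section Cuts

variable {V : Type*} {G : SimpleGraph V} {A A' B B' : Set V} {α : ℝ} {d : ℕ}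

theorem cutCard_le_cutCard [Finite V]
    (h : ∀ a ∈ A, ∀ b ∈ B, G.Adj a b → a ∈ A' ∧ b ∈ B') : cutCard G A B ≤ cutCard G A' B' :=
  Set.ncard_le_ncard fun _ ⟨ha, hb, hab⟩ =>
    ⟨(h _ ha _ hb hab).1, (h _ ha _ hb hab).2, hab⟩

theorem cutCard_comm (G : SimpleGraph V) (A B : Set V) : cutCard G A B = cutCard G B A :=
  Nat.card_congr <| (Equiv.prodComm V V).subtypeEquiv fun p => by
    simp only [Equiv.prodComm_apply, Prod.fst_swap, Prod.snd_swap, G.adj_comm p.1, and_left_comm]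

theorem cutCard_union_left_le [Finite V] (G : SimpleGraph V) (A A' B : Set V) :
    cutCard G (A ∪ A') B ≤ cutCard G A B + cutCard G A' B := by
  refine (Set.ncard_le_ncard ?_).trans (Set.ncard_union_le _ _)
  rintro p ⟨hp | hp, h⟩
  exacts [Or.inl ⟨hp, h⟩, Or.inr ⟨hp, h⟩]

theorem cutCard_union_right_le [Finite V] (G : SimpleGraph V) (A B B' : Set V) :
    cutCard G A (B ∪ B') ≤ cutCard G A B + cutCard G A B' := by
  simpa only [cutCard_comm G A] using cutCard_union_left_le G B B' A

theorem cutCard_induce (G : SimpleGraph V) (U : Set V) (A B : Set U) :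
    cutCard (G.induce U) A B = cutCard G (Subtype.val '' A) (Subtype.val '' B) := by
  refine (Set.ncard_image_of_injective _
    (Subtype.val_injective.prodMap Subtype.val_injective)).symm.trans ?_
  refine congrArg Set.ncard (Set.ext ?_)
  rintro ⟨x, y⟩
  constructor
  · rintro ⟨⟨a, b⟩, ⟨ha, hb, hab⟩, h⟩
    obtain ⟨rfl, rfl⟩ := Prod.ext_iff.1 h
    exact ⟨⟨a, ha, rfl⟩, ⟨b, hb, rfl⟩, hab⟩
  · rintro ⟨⟨a, ha, rfl⟩, ⟨b, hb, rfl⟩, hab⟩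
    exact ⟨(a, b), ⟨ha, hb, hab⟩, rfl⟩

theorem ncard_iUnion_le_mul {ι : Type*} [Finite ι] {s : ι → Set V} {m : ℕ}
    (h : ∀ i, (s i).ncard ≤ m) : (⋃ i, s i).ncard ≤ Nat.card ι * m := by
  have := Fintype.ofFinite ι
  calc (⋃ i, s i).ncard ≤ ∑ i, (s i).ncard := Set.ncard_iUnion_le_of_fintype s
    _ ≤ ∑ _i : ι, m := Finset.sum_le_sum fun i _ => h i
    _ = Nat.card ι * m := by simp

theorem DegLE.cutCard_le [Finite V] (hd : DegLE G d) (A B : Set V) :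
    cutCard G A B ≤ d * B.ncard := by
  have hcover : {p : V × V | p.1 ∈ A ∧ p.2 ∈ B ∧ G.Adj p.1 p.2} ⊆
      ⋃ b : B, (fun a => (a, b.1)) '' {a | G.Adj b a} := by
    rintro ⟨a, b⟩ ⟨-, hb, hab⟩
    exact Set.mem_iUnion.2 ⟨⟨b, hb⟩, a, hab.symm, rfl⟩
  have hfiber (b : B) : ((fun a => (a, b.1)) '' {a | G.Adj b a}).ncard ≤ d :=
    (Set.ncard_image_le).trans (hd b)
  calc cutCard G A B ≤ (⋃ b : B, (fun a => (a, b.1)) '' {a | G.Adj b a}).ncard :=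
        Set.ncard_le_ncard hcover
    _ ≤ Nat.card B * d := ncard_iUnion_le_mul hfiber
    _ = d * B.ncard := mul_comm _ _

theorem DegLE.of_isContained {V' : Type*} [Finite V'] {G' : SimpleGraph V'} (hd : DegLE G' d)
    (h : G ⊑ G') : DegLE G d := by
  obtain ⟨f⟩ := h
  intro v
  refine (Set.ncard_le_ncard_of_injOn f (fun w hw => ?_) f.injective.injOn).trans (hd (f v))
  exact f.toHom.map_adj hw

theorem IsExpander.mul_min_ncard_le (hG : IsExpander G α) (A : Set V) :
    α * (min A.ncard Aᶜ.ncard : ℝ) ≤ cutCard G A Aᶜ := by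
  rcases A.eq_empty_or_nonempty with rfl | hA
  · simp
  rcases Aᶜ.eq_empty_or_nonempty with hA' | hA'
  · simp [hA']
  · exact hG A hA hA'

theorem isExpander_of_mul_ncard_le [Finite V]
    (h : ∀ A : Set V, A.Nonempty → 2 * A.ncard ≤ Nat.card V → α * A.ncard ≤ cutCard G A Aᶜ) :
    IsExpander G α := by
  intro A hA hA'
  have hcard := Set.ncard_add_ncard_compl A
  simp only [Nat.card_coe_set_eq]
  rcases le_total A.ncard Aᶜ.ncard with hle | hle
  · rw [min_eq_left (Nat.cast_le.2 hle)]
    exact h A hA (by lia)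
  · rw [min_eq_right (Nat.cast_le.2 hle), cutCard_comm]
    simpa only [compl_compl] using h Aᶜ hA' (by lia)

end Cuts

section Diameter

variable {V : Type*} {G : SimpleGraph V} {α : ℝ} {d : ℕ}

theorem mem_ball_add_one_of_adj {x a b : V} {r : ℕ∞} (ha : a ∈ G.ball x r) (hab : G.Adj a b) :
    b ∈ G.ball x (r + 1) := by
  have hb : G.edist b x ≤ G.edist a x + 1 := by
    simpa only [SimpleGraph.edist_eq_one_iff_adj.2 hab.symm, add_comm] using
      G.edist_triangle (u := b) (v := a) (w := x)
  exact hb.trans_lt ((ENat.add_lt_add_iff_right ENat.one_ne_top).2 ha)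

theorem IsExpander.mul_ncard_ball_le [Finite V] (hG : IsExpander G α) (hd : DegLE G d) {x : V}
    {r : ℕ∞} (hr : 2 * (G.ball x r).ncard ≤ Nat.card V) :
    (1 + α / d) * (G.ball x r).ncard ≤ (G.ball x (r + 1)).ncard := by
  have hcompl := Set.ncard_add_ncard_compl (G.ball x r)
  have hexp := hG.mul_min_ncard_le (G.ball x r)
  rw [min_eq_left (Nat.cast_le.2 (by lia))] at hexp
  have hcut : cutCard G (G.ball x r) (G.ball x r)ᶜ ≤
      d * (G.ball x (r + 1) \ G.ball x r).ncard :=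
    (cutCard_le_cutCard (B' := G.ball x (r + 1) \ G.ball x r) fun _ ha _ hb hab =>
      ⟨ha, mem_ball_add_one_of_adj ha hab, hb⟩).trans (hd.cutCard_le _ _)
  have hnew : α / d * (G.ball x r).ncard ≤ (G.ball x (r + 1) \ G.ball x r).ncard := by
    rw [div_mul_eq_mul_div]
    refine div_le_of_le_mul₀ (by positivity) (by positivity) (hexp.trans ?_)
    rw [mul_comm]
    exact_mod_cast hcut
  have hball := Set.ncard_sdiff_add_ncard_of_subset (G.ball_mono (c := x) le_self_add :
    G.ball x r ⊆ G.ball x (r + 1))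
  rw [← hball, Nat.cast_add]
  linarith

theorem IsExpander.card_lt_or_pow_le_ncard_ball [Finite V] (hG : IsExpander G α)
    (hd : DegLE G d) (hα : 0 ≤ α) (x : V) (k : ℕ) :
    Nat.card V < 2 * (G.ball x (k + 1)).ncard ∨
      (1 + α / d) ^ k ≤ ((G.ball x (k + 1)).ncard : ℝ) := by
  induction k with
  | zero => simp
  | succ k ih =>
    rw [Nat.cast_succ]
    rcases lt_or_ge (Nat.card V) (2 * (G.ball x (k + 1)).ncard) with hlarge | hsmall
    · have := Set.ncard_le_ncard (G.ball_mono (c := x) le_self_add :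
        G.ball x (k + 1) ⊆ G.ball x (k + 1 + 1))
      exact Or.inl (by lia)
    · right
      calc (1 + α / d) ^ (k + 1) = (1 + α / d) * (1 + α / d) ^ k := pow_succ' _ _
        _ ≤ (1 + α / d) * (G.ball x (k + 1)).ncard := by
          gcongr
          exact ih.resolve_left hsmall.not_gt
        _ ≤ (G.ball x (k + 1 + 1)).ncard := hG.mul_ncard_ball_le hd hsmall

theorem IsExpander.ediam_le [Finite V] (hG : IsExpander G α) (hd : DegLE G d) (hα : 0 ≤ α)
    {k : ℕ} (hk : (Nat.card V : ℝ) ≤ (1 + α / d) ^ k) : G.ediam ≤ (2 * k : ℕ) := by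
  have hball (x : V) : Nat.card V < 2 * (G.ball x (k + 1)).ncard := by
    have : Nonempty V := ⟨x⟩
    rcases hG.card_lt_or_pow_le_ncard_ball hd hα x k with h | h
    · exact h
    · have hV : Nat.card V ≤ (G.ball x (k + 1)).ncard := by exact_mod_cast hk.trans h
      have := Nat.card_pos (α := V)
      lia
  have hdist {x z : V} (hz : z ∈ G.ball x (k + 1)) : G.edist z x ≤ k :=
    (ENat.lt_add_one_iff (ENat.natCast_ne_top k)).1 hz
  refine SimpleGraph.ediam_le_of_edist_le fun x y => ?_
  obtain ⟨z, hzx, hzy⟩ := Set.nonempty_inter_of_lt_ncard_add_ncard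
    (s := G.ball x (k + 1)) (t := G.ball y (k + 1)) (by have := hball x; have := hball y; lia)
  calc G.edist x y ≤ G.edist x z + G.edist z y := G.edist_triangle
    _ ≤ k + k := add_le_add (G.edist_comm.trans_le (hdist hzx)) (hdist hzy)
    _ = (2 * k : ℕ) := by push_cast; exact (two_mul _).symm

theorem exists_connected_superset_of_ediam_le [Nonempty V] {m : ℕ} (hG : G.ediam ≤ m)
    {T : Set V} (hT : T.Finite) :
    ∃ Q, T ⊆ Q ∧ (G.induce Q).Connected ∧ Q.ncard ≤ T.ncard * m + 1 := by
  obtain ⟨x⟩ := ‹Nonempty V›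
  suffices ∃ Q, x ∈ Q ∧ T ⊆ Q ∧ (G.induce Q).Connected ∧ Q.ncard ≤ T.ncard * m + 1 by
    obtain ⟨Q, -, hQ⟩ := this
    exact ⟨Q, hQ⟩
  induction T, hT using Set.Finite.induction_on with
  | empty =>
    exact ⟨{x}, rfl, Set.empty_subset _, SimpleGraph.Connected.of_subsingleton, by simp⟩
  | @insert y T hy hT ih =>
    obtain ⟨Q, hxQ, hTQ, hQ, hcard⟩ := ih
    have hxy : G.edist x y ≤ m := SimpleGraph.edist_le_ediam.trans hG
    obtain ⟨p, hp⟩ := SimpleGraph.exists_walk_of_edist_ne_top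
      (ne_top_of_le_ne_top (ENat.natCast_ne_top m) hxy)
    have hpm : p.length ≤ m := by exact_mod_cast hp.trans_le hxy
    have hunion : Q ∪ {v | v ∈ p.support} = Q ∪ {v | v ∈ p.support.tail} := by
      ext v
      simp only [Set.mem_union, Set.mem_ofPred_eq, p.mem_support_iff]
      refine ⟨?_, Or.imp_right Or.inr⟩
      rintro (h | rfl | h)
      exacts [Or.inl h, Or.inl hxQ, Or.inr h]
    have htail : {v | v ∈ p.support.tail}.ncard ≤ m := by
      classical
      rw [← List.coe_toFinset, Set.ncard_coe_finset]
      refine (List.toFinset_card_le _).trans ?_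
      simpa only [List.length_tail, p.length_support, Nat.add_sub_cancel] using hpm
    refine ⟨Q ∪ {v | v ∈ p.support}, Or.inl hxQ, ?_, ?_, ?_⟩
    · exact Set.insert_subset (Or.inr p.end_mem_support) (hTQ.trans Set.subset_union_left)
    · exact SimpleGraph.induce_union_connected hQ.preconnected
        p.connected_induce_support.preconnected ⟨x, hxQ, p.start_mem_support⟩
    · rw [hunion, Set.ncard_insert_of_notMem hy hT]
      have := Set.ncard_union_le Q {v | v ∈ p.support.tail}
      lia

end Diameter

section Minor

variable {V V' W : Type*} {H : SimpleGraph W} {G : SimpleGraph V} {G' : SimpleGraph V'}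
  {φ ψ : W → Set V}

theorem connected_induce_image (f : G →g G') {A : Set V} (hA : (G.induce A).Connected) :
    (G'.induce (f '' A)).Connected :=
  hA.map (SimpleGraph.induceHom f (Set.mapsTo_image f A))
    (Set.surjective_mapsTo_image_restrict f A)

theorem IsMinor.trans_isContained (h : IsMinor H G) (hG : G ⊑ G') : IsMinor H G' := by
  obtain ⟨φ, hconn, hdisj, hadj⟩ := h
  obtain ⟨f⟩ := hG
  refine ⟨fun u => f '' φ u, fun u => connected_induce_image f.toHom (hconn u),
    fun u v huv => (Set.disjoint_image_iff f.injective).2 (hdisj u v huv), fun u v huv => ?_⟩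
  obtain ⟨a, ha, b, hb, hab⟩ := hadj u v huv
  exact ⟨f a, ⟨a, ha, rfl⟩, f b, ⟨b, hb, rfl⟩, f.toHom.map_adj hab⟩

/-- The branch sets `φ` form a model in `G` of an induced subgraph of `H`; the vertices of `H`
that have not been embedded are those with empty branch set. -/
structure IsPartialModel (H : SimpleGraph W) (G : SimpleGraph V) (φ : W → Set V) : Prop where
  preconnected : ∀ u, (G.induce (φ u)).Preconnected
  disjoint : ∀ u v, u ≠ v → Disjoint (φ u) (φ v)
  exists_adj : ∀ u v, H.Adj u v → (φ u).Nonempty → (φ v).Nonempty →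
    ∃ a ∈ φ u, ∃ b ∈ φ v, G.Adj a b

theorem IsPartialModel.empty : IsPartialModel H G fun _ => ∅ where
  preconnected _ x := x.2.elim
  disjoint _ _ _ := Set.disjoint_empty _
  exists_adj _ _ _ h := absurd h Set.not_nonempty_empty

theorem IsPartialModel.isMinor (h : IsPartialModel H G φ) (hφ : ∀ u, (φ u).Nonempty) :
    IsMinor H G := by
  refine ⟨φ, fun u => ?_, h.disjoint, fun u v huv => h.exists_adj u v huv (hφ u) (hφ v)⟩
  have := (hφ u).to_subtype
  exact ⟨h.preconnected u⟩

theorem IsPartialModel.restrict (h : IsPartialModel H G φ) (hψ : ∀ u, ψ u = φ u ∨ ψ u = ∅) :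
    IsPartialModel H G ψ where
  preconnected u := by
    rcases hψ u with hu | hu <;> rw [hu]
    exacts [h.preconnected u, fun x => x.2.elim]
  disjoint u v huv := by
    rcases hψ u with hu | hu <;> rcases hψ v with hv | hv <;> rw [hu, hv]
    exacts [h.disjoint u v huv, Set.disjoint_empty _, Set.empty_disjoint _,
      Set.disjoint_empty _]
  exists_adj u v huv hu hv := by
    have hu' := (hψ u).resolve_right hu.ne_empty
    have hv' := (hψ v).resolve_right hv.ne_empty
    rw [hu'] at hu ⊢
    rw [hv'] at hv ⊢
    exact h.exists_adj u v huv hu hv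

theorem union_iUnion_update [DecidableEq W] (φ : W → Set V) (v : W) (Q : Set V) :
    φ v ∪ ⋃ u, Function.update φ v Q u = Q ∪ ⋃ u, φ u := by
  have hsub (χ : W → Set V) (R : Set V) : ⋃ u, Function.update χ v R u ⊆ R ∪ ⋃ u, χ u :=
    Set.iUnion_subset fun u => by
      rcases eq_or_ne u v with rfl | hu
      · rw [Function.update_self]
        exact Set.subset_union_left
      · rw [Function.update_of_ne hu]
        exact (Set.subset_iUnion χ u).trans Set.subset_union_right
  refine (Set.union_subset ?_ (hsub φ Q)).antisymm (Set.union_subset ?_ ?_)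
  · exact (Set.subset_iUnion φ v).trans Set.subset_union_right
  · refine Set.subset_union_of_subset_right ?_ _
    simpa only [Function.update_self] using Set.subset_iUnion (Function.update φ v Q) v
  · simpa only [Function.update_idem, Function.update_eq_self] using
      hsub (Function.update φ v Q) (φ v)

theorem iUnion_update_of_eq_empty [DecidableEq W] {φ : W → Set V} {v : W} (hv : φ v = ∅)
    (Q : Set V) : ⋃ u, Function.update φ v Q u = Q ∪ ⋃ u, φ u := by
  simpa only [hv, Set.empty_union] using union_iUnion_update φ v Q

theorem IsPartialModel.update [DecidableEq W] (h : IsPartialModel H G φ) {v : W} {Q : Set V}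
    (hQ : (G.induce Q).Preconnected) (hdisj : Disjoint Q (⋃ u, φ u))
    (hadj : ∀ u, H.Adj v u → (φ u).Nonempty → ∃ a ∈ φ u, ∃ b ∈ Q, G.Adj a b) :
    IsPartialModel H G (Function.update φ v Q) where
  preconnected u := by
    rcases eq_or_ne u v with rfl | hu
    · rwa [Function.update_self]
    · rw [Function.update_of_ne hu]
      exact h.preconnected u
  disjoint x y hxy := by
    have hQφ (u : W) : Disjoint Q (φ u) := hdisj.mono_right (Set.subset_iUnion φ u)
    rcases eq_or_ne x v with rfl | hx
    · rw [Function.update_self, Function.update_of_ne hxy.symm]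
      exact hQφ y
    rcases eq_or_ne y v with rfl | hy
    · rw [Function.update_self, Function.update_of_ne hx]
      exact (hQφ x).symm
    · rw [Function.update_of_ne hx, Function.update_of_ne hy]
      exact h.disjoint x y hxy
  exists_adj x y hxy := by
    rcases eq_or_ne x v with rfl | hx
    · rw [Function.update_self, Function.update_of_ne hxy.ne']
      intro _ hy
      obtain ⟨a, ha, b, hb, hab⟩ := hadj y hxy hy
      exact ⟨b, hb, a, ha, hab.symm⟩
    rcases eq_or_ne y v with rfl | hy
    · rw [Function.update_self, Function.update_of_ne hx]
      exact fun hx _ => hadj x hxy.symm hx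
    · rw [Function.update_of_ne hx, Function.update_of_ne hy]
      exact h.exists_adj x y hxy

end Minor

section Stage

variable {V W : Type*} {H : SimpleGraph W} {G : SimpleGraph V} {α : ℝ} {d s Δ k : ℕ}
  {D E X : Set V} {φ ψ : W → Set V}

/-- The vertices neither discarded into `D` nor used by one of the branch sets `φ`. -/
def freeSet (D : Set V) (φ : W → Set V) : Set V :=
  (D ∪ ⋃ u, φ u)ᶜ

theorem freeSet_subset_freeSet (h : D ∪ ⋃ u, φ u ⊆ E ∪ ⋃ u, ψ u) : freeSet E ψ ⊆ freeSet D φ :=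
  Set.compl_subset_compl.2 h

theorem disjoint_of_subset_freeSet {Q : Set V} (hQ : Q ⊆ freeSet D φ) : Disjoint D Q :=
  Set.disjoint_left.2 fun _ hx hxQ => hQ hxQ (Or.inl hx)

theorem disjoint_iUnion_of_subset_freeSet {Q : Set V} (hQ : Q ⊆ freeSet D φ) :
    Disjoint Q (⋃ u, φ u) :=
  Set.disjoint_left.2 fun _ hxQ hx => hQ hxQ (Or.inr hx)

/-- A stage of the greedy embedding of `H` into `G`: a partial model with branch sets of at most
`s` vertices, together with a small set `D` of discarded vertices which sends few edges into the
free vertices. -/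
structure IsStage (H : SimpleGraph W) (G : SimpleGraph V) (α : ℝ) (s : ℕ) (D : Set V)
    (φ : W → Set V) : Prop extends IsPartialModel H G φ where
  ncard_le : ∀ u, (φ u).ncard ≤ s
  disjoint_discard : Disjoint D (⋃ u, φ u)
  cutCard_le : (cutCard G D (freeSet D φ) : ℝ) ≤ α / 4 * D.ncard
  twelve_mul_ncard_le : 12 * D.ncard ≤ Nat.card V

theorem IsStage.empty : IsStage H G α s ∅ fun _ => ∅ where
  toIsPartialModel := .empty
  ncard_le _ := by simp
  disjoint_discard := Set.empty_disjoint _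
  cutCard_le := by simp [cutCard]
  twelve_mul_ncard_le := by simp

theorem IsStage.update [Finite V] [DecidableEq W] (h : IsStage H G α s D φ) {v : W} (hv : φ v = ∅)
    {Q : Set V} (hQfree : Q ⊆ freeSet D φ) (hQ : (G.induce Q).Preconnected) (hQs : Q.ncard ≤ s)
    (hadj : ∀ u, H.Adj v u → (φ u).Nonempty → ∃ a ∈ φ u, ∃ b ∈ Q, G.Adj a b) :
    IsStage H G α s D (Function.update φ v Q) := by
  have hunion := iUnion_update_of_eq_empty hv Q
  have hQφ := disjoint_iUnion_of_subset_freeSet hQfree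
  refine ⟨h.toIsPartialModel.update hQ hQφ hadj, fun u => ?_, ?_, ?_, h.twelve_mul_ncard_le⟩
  · rcases eq_or_ne u v with rfl | hu
    · rwa [Function.update_self]
    · rw [Function.update_of_ne hu]
      exact h.ncard_le u
  · rw [hunion]
    exact (disjoint_of_subset_freeSet hQfree).union_right h.disjoint_discard
  · refine le_trans ?_ h.cutCard_le
    have hfree : freeSet D (Function.update φ v Q) ⊆ freeSet D φ := by
      refine freeSet_subset_freeSet (Set.union_subset_union_right D ?_)
      rw [hunion]
      exact Set.subset_union_right
    exact_mod_cast cutCard_le_cutCard fun _ ha _ hb _ => ⟨ha, hfree hb⟩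

-- With `N` the order of `G`, expansion forbids sizes of `D` between `N / 12` and `3N / 4`: the
-- discarded set stays small as long as fewer than `2N / 3` vertices are added at a time.
theorem IsExpander.twelve_mul_ncard_le [Finite V] (hG : IsExpander G α) (hd : DegLE G d)
    (hα : 0 < α) {B : Set V} (hB : 16 * (d * B.ncard) ≤ α * Nat.card V)
    (hD : 4 * D.ncard < 3 * Nat.card V)
    (hcut : (cutCard G D (D ∪ B)ᶜ : ℝ) ≤ α / 4 * D.ncard) : 12 * D.ncard ≤ Nat.card V := by
  have hcompl : (D.ncard + Dᶜ.ncard : ℝ) = Nat.card V := by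
    exact_mod_cast Set.ncard_add_ncard_compl D
  have hsplit : (cutCard G D Dᶜ : ℝ) ≤ cutCard G D (D ∪ B)ᶜ + d * B.ncard := by
    have hle : cutCard G D Dᶜ ≤ cutCard G D ((D ∪ B)ᶜ ∪ B) :=
      cutCard_le_cutCard fun a ha b hb _ => ⟨ha, by by_cases h : b ∈ B <;> simp_all⟩
    exact_mod_cast (hle.trans (cutCard_union_right_le G D _ B)).trans
      (Nat.add_le_add_left (hd.cutCard_le D B) _)
  have hmin : (min D.ncard Dᶜ.ncard : ℝ) ≤ D.ncard / 4 + Nat.card V / 16 := by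
    refine le_of_mul_le_mul_left ?_ hα
    linarith [hG.mul_min_ncard_le D]
  have hD' : (4 * D.ncard : ℝ) < 3 * Nat.card V := by exact_mod_cast hD
  rcases min_le_iff.1 hmin with h | h
  · have : (12 * D.ncard : ℝ) ≤ Nat.card V := by linarith
    exact_mod_cast this
  · linarith

variable [Finite W]

theorem IsStage.ncard_iUnion_le (h : IsStage H G α s D φ) :
    (⋃ u, φ u).ncard ≤ Nat.card W * s :=
  ncard_iUnion_le_mul h.ncard_le

theorem IsStage.sixteen_mul_deg_mul_ncard_iUnion_le (h : IsStage H G α s D φ)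
    (hs : 16 * (d * (Nat.card W * s)) ≤ α * Nat.card V) :
    16 * (d * (⋃ u, φ u).ncard) ≤ α * Nat.card V := by
  have : ((⋃ u, φ u).ncard : ℝ) ≤ Nat.card W * s := by exact_mod_cast h.ncard_iUnion_le
  refine le_trans ?_ hs
  gcongr

theorem IsStage.sixteen_mul_ncard_iUnion_le (h : IsStage H G α s D φ) (hα : 0 < α)
    (hαd : α ≤ d) (hs : 16 * (d * (Nat.card W * s)) ≤ α * Nat.card V) :
    16 * (⋃ u, φ u).ncard ≤ Nat.card V := by
  have hd : (d : ℝ) * (16 * (⋃ u, φ u).ncard) ≤ d * Nat.card V := by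
    linarith [h.sixteen_mul_deg_mul_ncard_iUnion_le hs,
      mul_le_mul_of_nonneg_right hαd (Nat.cast_nonneg (Nat.card V))]
  exact_mod_cast le_of_mul_le_mul_left hd (hα.trans_le hαd)

variable [Finite V]

theorem IsStage.discard (h : IsStage H G α s D φ) (hG : IsExpander G α) (hd : DegLE G d)
    (hα : 0 < α) (hs : 16 * (d * (Nat.card W * s)) ≤ α * Nat.card V)
    (hψ : ∀ u, ψ u = φ u ∨ ψ u = ∅) (hDX : Disjoint D X) (hXψ : Disjoint X (⋃ u, ψ u))
    (hφ : ⋃ u, φ u ⊆ X ∪ ⋃ u, ψ u) (hX : 3 * X.ncard < 2 * Nat.card V)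
    (hcut : (cutCard G X (freeSet (D ∪ X) ψ) : ℝ) ≤ α / 4 * X.ncard) :
    IsStage H G α s (D ∪ X) ψ := by
  have hsub : ⋃ u, ψ u ⊆ ⋃ u, φ u := Set.iUnion_mono fun u => by
    rcases hψ u with hu | hu <;> simp [hu]
  have hncard (u : W) : (ψ u).ncard ≤ s :=
    (Set.ncard_le_ncard ((hψ u).elim Eq.subset fun hu => hu ▸ Set.empty_subset _)).trans
      (h.ncard_le u)
  have hDX' : ((D ∪ X).ncard : ℝ) = D.ncard + X.ncard := by
    exact_mod_cast Set.ncard_union_eq hDX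
  have hfree : freeSet (D ∪ X) ψ ⊆ freeSet D φ := by
    refine freeSet_subset_freeSet ?_
    rw [Set.union_assoc]
    exact Set.union_subset_union_right D hφ
  have hcut' : (cutCard G (D ∪ X) (freeSet (D ∪ X) ψ) : ℝ) ≤ α / 4 * (D ∪ X).ncard := by
    have hleft : (cutCard G (D ∪ X) (freeSet (D ∪ X) ψ) : ℝ) ≤
        cutCard G D (freeSet D φ) + cutCard G X (freeSet (D ∪ X) ψ) := by
      exact_mod_cast (cutCard_union_left_le G D X _).trans <| Nat.add_le_add_right
        (cutCard_le_cutCard fun _ ha _ hb _ => ⟨ha, hfree hb⟩) _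
    rw [hDX']
    linarith [h.cutCard_le]
  have hψB : 16 * (d * (⋃ u, ψ u).ncard) ≤ α * Nat.card V := by
    have : ((⋃ u, ψ u).ncard : ℝ) ≤ (⋃ u, φ u).ncard := by
      exact_mod_cast Set.ncard_le_ncard hsub
    refine le_trans ?_ (h.sixteen_mul_deg_mul_ncard_iUnion_le hs)
    gcongr
  refine ⟨h.restrict hψ, hncard, (h.disjoint_discard.mono_right hsub).union_left hXψ, hcut',
    hG.twelve_mul_ncard_le hd hα hψB ?_ hcut'⟩
  have := h.twelve_mul_ncard_le
  have := Set.ncard_union_le D X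
  lia

/-- A stage that maximises `2|D| + |⋃ φ|`. The weight `2` makes it profitable to discard a whole
branch set. -/
structure IsMaximalStage (H : SimpleGraph W) (G : SimpleGraph V) (α : ℝ) (s : ℕ) (D : Set V)
    (φ : W → Set V) : Prop extends IsStage H G α s D φ where
  potential_le : ∀ E ψ, IsStage H G α s E ψ →
    2 * E.ncard + (⋃ u, ψ u).ncard ≤ 2 * D.ncard + (⋃ u, φ u).ncard

theorem exists_isMaximalStage (H : SimpleGraph W) (G : SimpleGraph V) (α : ℝ) (s : ℕ) :
    ∃ D φ, IsMaximalStage H G α s D φ := by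
  obtain ⟨⟨D, φ⟩, hstage, hmax⟩ := Set.exists_max_image
    {p : Set V × (W → Set V) | IsStage H G α s p.1 p.2}
    (fun p => 2 * p.1.ncard + (⋃ u, p.2 u).ncard) (Set.toFinite _) ⟨(∅, fun _ => ∅), .empty⟩
  exact ⟨D, φ, hstage, fun E ψ h => hmax (E, ψ) h⟩

theorem IsMaximalStage.lt_cutCard (h : IsMaximalStage H G α s D φ) (hG : IsExpander G α)
    (hd : DegLE G d) (hα : 0 < α) (hs : 16 * (d * (Nat.card W * s)) ≤ α * Nat.card V)
    (hψ : ∀ u, ψ u = φ u ∨ ψ u = ∅) (hDX : Disjoint D X) (hXψ : Disjoint X (⋃ u, ψ u))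
    (hφ : ⋃ u, φ u ⊆ X ∪ ⋃ u, ψ u) (hX : 3 * X.ncard < 2 * Nat.card V) (hX0 : X.Nonempty) :
    α / 4 * X.ncard < cutCard G X (freeSet (D ∪ X) ψ) := by
  by_contra! hcut
  have hpot := h.potential_le _ _ (h.discard hG hd hα hs hψ hDX hXψ hφ hX hcut)
  have hcover := (Set.ncard_le_ncard hφ).trans (Set.ncard_union_le _ _)
  have := hX0.ncard_pos
  rw [Set.ncard_union_eq hDX] at hpot
  lia

theorem IsMaximalStage.isExpander_induce_freeSet (h : IsMaximalStage H G α s D φ)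
    (hG : IsExpander G α) (hd : DegLE G d) (hα : 0 < α)
    (hs : 16 * (d * (Nat.card W * s)) ≤ α * Nat.card V) :
    IsExpander (G.induce (freeSet D φ)) (α / 4) := by
  refine isExpander_of_mul_ncard_le fun A hA hAcard => ?_
  have hfree : Subtype.val '' A ⊆ freeSet D φ := Subtype.coe_image_subset _ A
  have hcompl : Subtype.val '' Aᶜ = freeSet (D ∪ Subtype.val '' A) φ := by
    rw [Set.image_compl_eq_range_sdiff_image Subtype.val_injective, Subtype.range_val]
    ext x
    simp only [freeSet, Set.mem_sdiff, Set.mem_compl_iff, Set.mem_union]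
    tauto
  have hncard : (Subtype.val '' A).ncard = A.ncard :=
    Set.ncard_image_of_injective A Subtype.val_injective
  have hlt := h.lt_cutCard hG hd hα hs (ψ := φ) (X := Subtype.val '' A) (fun _ => Or.inl rfl)
    (disjoint_of_subset_freeSet hfree) (disjoint_iUnion_of_subset_freeSet hfree)
    Set.subset_union_right ?_ (hA.image _)
  · rw [cutCard_induce, hcompl, ← hncard]
    exact hlt.le
  · have : Nat.card (freeSet D φ) ≤ Nat.card V := Finite.card_subtype_le _
    have := hA.ncard_pos
    lia

theorem IsMaximalStage.exists_adj_freeSet (h : IsMaximalStage H G α s D φ)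
    (hG : IsExpander G α) (hd : DegLE G d) (hα : 0 < α) (hαd : α ≤ d)
    (hs : 16 * (d * (Nat.card W * s)) ≤ α * Nat.card V) {u : W} (hu : (φ u).Nonempty) :
    ∃ a ∈ φ u, ∃ b ∈ freeSet D φ, G.Adj a b := by
  classical
  have hunion : φ u ∪ ⋃ v, Function.update φ u ∅ v = ⋃ v, φ v := by
    simpa only [Set.empty_union] using union_iUnion_update φ u ∅
  have hdisj (v : W) : Disjoint (φ u) (Function.update φ u ∅ v) := by
    rcases eq_or_ne v u with rfl | hv
    · rw [Function.update_self]
      exact Set.disjoint_empty _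
    · rw [Function.update_of_ne hv]
      exact h.disjoint u v hv.symm
  have hcard : 3 * (φ u).ncard < 2 * Nat.card V := by
    have := h.sixteen_mul_ncard_iUnion_le hα hαd hs
    have := Set.ncard_le_ncard (Set.subset_iUnion φ u)
    have := hu.ncard_pos
    lia
  have hlt := h.lt_cutCard hG hd hα hs (X := φ u) (ψ := Function.update φ u ∅)
    (fun v => (eq_or_ne v u).symm.imp (Function.update_of_ne · ∅ φ) fun hv => by simp [hv])
    (h.disjoint_discard.mono_right (Set.subset_iUnion φ u)) (Set.disjoint_iUnion_right.2 hdisj)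
    hunion.ge hcard hu
  have hpos : 0 < cutCard G (φ u) (freeSet (D ∪ φ u) (Function.update φ u ∅)) := by
    exact_mod_cast (show (0 : ℝ) ≤ α / 4 * (φ u).ncard by positivity).trans_lt hlt
  obtain ⟨⟨⟨a, b⟩, ha, hb, hab⟩⟩ := (Nat.card_pos_iff.1 hpos).1
  refine ⟨a, ha, b, freeSet_subset_freeSet ?_ hb, hab⟩
  rw [Set.union_assoc, hunion]

theorem IsStage.freeSet_nonempty [Nonempty V] (h : IsStage H G α s D φ) (hα : 0 < α)
    (hαd : α ≤ d) (hs : 16 * (d * (Nat.card W * s)) ≤ α * Nat.card V) :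
    (freeSet D φ).Nonempty := by
  have := Nat.card_pos (α := V)
  have := h.twelve_mul_ncard_le
  have := h.sixteen_mul_ncard_iUnion_le hα hαd hs
  have := Set.ncard_union_le D (⋃ u, φ u)
  have := Set.ncard_add_ncard_compl (D ∪ ⋃ u, φ u)
  exact (Set.ncard_pos).1 (by unfold freeSet; lia)

theorem IsMaximalStage.exists_link [Nonempty V] (h : IsMaximalStage H G α s D φ)
    (hG : IsExpander G α) (hd : DegLE G d) (hα : 0 < α) (hαd : α ≤ d)
    (hs : 16 * (d * (Nat.card W * s)) ≤ α * Nat.card V)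
    (hk : (Nat.card V : ℝ) ≤ (1 + α / 4 / d) ^ k) (N : Set W) :
    ∃ Q ⊆ freeSet D φ, (G.induce Q).Connected ∧ Q.ncard ≤ N.ncard * (2 * k) + 1 ∧
      ∀ u ∈ N, (φ u).Nonempty → ∃ a ∈ φ u, ∃ b ∈ Q, G.Adj a b := by
  have := (h.freeSet_nonempty hα hαd hs).to_subtype
  have hcard : (Nat.card (freeSet D φ) : ℝ) ≤ Nat.card V := by
    exact_mod_cast Finite.card_subtype_le _
  have hdiam : (G.induce (freeSet D φ)).ediam ≤ (2 * k : ℕ) :=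
    (h.isExpander_induce_freeSet hG hd hα hs).ediam_le
      (hd.of_isContained (SimpleGraph.Copy.induce G _).isContained) (by positivity)
      (hcard.trans hk)
  have hport (u : W) : ∃ b : freeSet D φ, (φ u).Nonempty → ∃ a ∈ φ u, G.Adj a b := by
    by_cases hu : (φ u).Nonempty
    · obtain ⟨a, ha, b, hb, hab⟩ := h.exists_adj_freeSet hG hd hα hαd hs hu
      exact ⟨⟨b, hb⟩, fun _ => ⟨a, ha, hab⟩⟩
    · exact ⟨Classical.arbitrary _, fun hu' => absurd hu' hu⟩
  choose port hport using hport
  obtain ⟨Q, hNQ, hQ, hQcard⟩ :=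
    exists_connected_superset_of_ediam_le hdiam (N.toFinite.image port)
  refine ⟨Subtype.val '' Q, Subtype.coe_image_subset _ Q,
    connected_induce_image (SimpleGraph.Embedding.induce _).toHom hQ, ?_, fun u hu hφu => ?_⟩
  · calc (Subtype.val '' Q).ncard ≤ Q.ncard := Set.ncard_image_le
      _ ≤ (port '' N).ncard * (2 * k) + 1 := hQcard
      _ ≤ N.ncard * (2 * k) + 1 := by
        gcongr
        exact Set.ncard_image_le
  · obtain ⟨a, ha, hab⟩ := hport u hφu
    exact ⟨a, ha, port u, ⟨_, hNQ ⟨u, hu, rfl⟩, rfl⟩, hab⟩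

theorem IsMaximalStage.nonempty_branch [Nonempty V]
    (h : IsMaximalStage H G α (Δ * (2 * k) + 1) D φ) (hG : IsExpander G α) (hd : DegLE G d)
    (hH : DegLE H Δ) (hα : 0 < α) (hαd : α ≤ d)
    (hs : 16 * (d * (Nat.card W * (Δ * (2 * k) + 1 : ℕ))) ≤ α * Nat.card V)
    (hk : (Nat.card V : ℝ) ≤ (1 + α / 4 / d) ^ k) (v : W) : (φ v).Nonempty := by
  classical
  by_contra! hv
  obtain ⟨Q, hQfree, hQ, hQcard, hadj⟩ :=
    h.exists_link hG hd hα hαd hs hk {u | H.Adj v u}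
  have hQs : Q.ncard ≤ Δ * (2 * k) + 1 := hQcard.trans (by gcongr; exact hH v)
  have hstage := h.update hv hQfree hQ.preconnected hQs hadj
  have hpot := h.potential_le _ _ hstage
  rw [iUnion_update_of_eq_empty hv,
    Set.ncard_union_eq (disjoint_iUnion_of_subset_freeSet hQfree)] at hpot
  have hQpos : 0 < Q.ncard := (Set.ncard_pos).2 (Set.nonempty_coe_sort.1 hQ.nonempty)
  lia

theorem IsExpander.isMinor_of_card_le_pow [Nonempty V] (hG : IsExpander G α) (hd : DegLE G d)
    (hH : DegLE H Δ) (hα : 0 < α) (hαd : α ≤ d)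
    (hk : (Nat.card V : ℝ) ≤ (1 + α / 4 / d) ^ k)
    (hs : 16 * (d * (Nat.card W * (Δ * (2 * k) + 1 : ℕ))) ≤ α * Nat.card V) :
    IsMinor H G := by
  obtain ⟨D, φ, h⟩ := exists_isMaximalStage H G α (Δ * (2 * k) + 1)
  exact h.isMinor (h.nonempty_branch hG hd hH hα hαd hs hk)

end Stage

theorem exists_le_one_add_pow {n t : ℝ} (hn : 1 ≤ n) (ht : 0 < t) (ht1 : t ≤ 1) :
    ∃ k : ℕ, n ≤ (1 + t) ^ k ∧ k ≤ Real.logb 2 n / t + 1 := by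
  have hlog : 0 ≤ Real.logb 2 n := Real.logb_nonneg one_lt_two hn
  refine ⟨⌈Real.logb 2 n / t⌉₊, ?_, (Nat.ceil_lt_add_one (by positivity)).le⟩
  have hceil : Real.logb 2 n ≤ t * ⌈Real.logb 2 n / t⌉₊ := by
    rw [← div_le_iff₀' ht]
    exact Nat.le_ceil _
  have hbernoulli : (2 : ℝ) ^ t ≤ 1 + t := by
    simpa only [one_add_one_eq_two, mul_one] using
      rpow_one_add_le_one_add_mul_self (s := 1) (by norm_num) ht.le ht1
  calc n = 2 ^ Real.logb 2 n := (Real.rpow_logb two_pos (by norm_num) (by linarith)).symm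
    _ ≤ 2 ^ (t * ⌈Real.logb 2 n / t⌉₊) := Real.rpow_le_rpow_of_exponent_le one_le_two hceil
    _ = (2 ^ t) ^ ⌈Real.logb 2 n / t⌉₊ := Real.rpow_mul_natCast two_pos.le _ _
    _ ≤ (1 + t) ^ ⌈Real.logb 2 n / t⌉₊ := pow_le_pow_left₀ (by positivity) hbernoulli _

theorem sixteen_mul_branch_volume_le {α d Δ L N h k : ℝ} (hα : 0 < α) (hα1 : α ≤ 1) (hd : 1 ≤ d)
    (hΔ : 0 ≤ Δ) (hL : 1 ≤ L) (hh : 0 ≤ h) (hk : k ≤ L / (α / 4 / d) + 1)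
    (hN : h ≤ α ^ 2 * N / (160 * (Δ + 1) * d ^ 2 * L)) :
    16 * (d * (h * (Δ * (2 * k) + 1))) ≤ α * N := by
  have hone : 1 ≤ d * L / α := by
    rw [le_div_iff₀ hα]
    nlinarith
  have hk' : k ≤ 5 * (d * L / α) :=
    calc k ≤ L / (α / 4 / d) + 1 := hk
      _ = 4 * (d * L / α) + 1 := by field_simp
      _ ≤ 5 * (d * L / α) := by linarith
  have hbranch : Δ * (2 * k) + 1 ≤ 10 * (Δ + 1) * (d * L / α) := by
    linarith [mul_le_mul_of_nonneg_left hk' hΔ]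
  rw [le_div_iff₀ (by positivity)] at hN
  calc 16 * (d * (h * (Δ * (2 * k) + 1)))
      ≤ 16 * (d * (h * (10 * (Δ + 1) * (d * L / α)))) := by gcongr
    _ = h * (160 * (Δ + 1) * d ^ 2 * L) / α := by ring
    _ ≤ α ^ 2 * N / α := by gcongr
    _ = α * N := by field_simp

theorem embed_into_path_of_expanders_general {U V W : Type*} [Finite U] [Finite W]
    {T : SimpleGraph U} {G : SimpleGraph V} {H : SimpleGraph W} {α n : ℝ} {d Δ : ℕ}
    (hT : IsExpander T α) (hTG : T ⊑ G) (hd : DegLE T d) (hH : DegLE H Δ)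
    (hα : 0 < α) (hα1 : α ≤ 1) (hn : 2 ≤ n) (hUn : Nat.card U ≤ n)
    (hW : Nat.card W ≤ α ^ 2 * Nat.card U / (160 * (Δ + 1) * d ^ 2 * Real.logb 2 n)) :
    IsMinor H G := by
  rcases isEmpty_or_nonempty W with hW0 | hW0
  · exact ⟨fun _ => ∅, isEmptyElim, isEmptyElim, isEmptyElim⟩
  have hWpos : (0 : ℝ) < Nat.card W := by exact_mod_cast Nat.card_pos
  have hd0 : d ≠ 0 := by
    rintro rfl
    exact (hWpos.trans_le hW).ne' (by simp)
  have hU0 : Nat.card U ≠ 0 := fun hU0 => (hWpos.trans_le hW).ne' (by simp [hU0])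
  have := (Nat.card_ne_zero.1 hU0).1
  have hd1 : (1 : ℝ) ≤ d := by exact_mod_cast Nat.one_le_iff_ne_zero.2 hd0
  have hlog : 1 ≤ Real.logb 2 n := by
    simpa only [Real.logb_self_eq_one one_lt_two] using
      Real.logb_le_logb_of_le one_lt_two two_pos hn
  have hrate : α / 4 / d ≤ 1 := (div_le_one (by positivity)).2 (by linarith)
  obtain ⟨k, hnk, hk⟩ := exists_le_one_add_pow (one_le_two.trans hn) (by positivity) hrate
  refine (hT.isMinor_of_card_le_pow hd hH hα (hα1.trans hd1) (hUn.trans hnk) ?_).trans_isContained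
    hTG
  exact_mod_cast sixteen_mul_branch_volume_le hα hα1 hd1 (Nat.cast_nonneg Δ) hlog hWpos.le hk hW

theorem width_bound_le_expander_bound {w n N L : ℝ} (hw : 0 ≤ w) (hwn : w ≤ n)
    (hwN : w ≤ N) (hn : 0 < n) (hL : 0 < L) (d : ℕ) (α : ℝ) :
    w ^ 2 * α ^ 2 / (2 ^ 19 * d ^ 4 * n * L) ≤ α ^ 2 * N / (160 * (3 + 1) * d ^ 2 * L) := by
  rcases Nat.eq_zero_or_pos d with rfl | hd
  · simp
  have hd1 : (1 : ℝ) ≤ d := by exact_mod_cast hd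
  have hN : 0 ≤ N := hw.trans hwN
  calc w ^ 2 * α ^ 2 / (2 ^ 19 * d ^ 4 * n * L)
      = w * w * α ^ 2 / (n * (2 ^ 19 * d ^ 4 * L)) := by ring
    _ ≤ n * N * α ^ 2 / (n * (160 * (3 + 1) * d ^ 2 * L)) := by
        gcongr <;> norm_num
    _ = α ^ 2 * N / (160 * (3 + 1) * d ^ 2 * L) := by
        rw [mul_assoc, mul_div_mul_left _ _ hn.ne', mul_comm N]

namespace PathOfExpanders

variable {V : Type} {w : ℕ} {α : ℝ} (P : PathOfExpanders V w α) (i : Fin 6)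

theorem induce_T_isContained : (P.T i).induce (P.TV i) ⊑ P.graph :=
  have hle : P.T i ≤ P.graph := le_sup_of_le_left (le_sup_of_le_right (le_iSup P.T i))
  (SimpleGraph.Copy.induce (P.T i) (P.TV i)).isContained.trans (.of_le hle)

theorem width_le_card_TV [Finite V] : w ≤ Nat.card (P.TV i) :=
  (P.Ct_card i).ge.trans (Nat.card_mono (Set.toFinite _) (P.Ct_sub i))

end PathOfExpanders

/-- Embedding degree-3 graphs into a Path-of-Expanders System: there is a constant
`c₀ > 0` such that for every Path-of-Expanders System `Π` of expansion `α` and width `w`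
whose graph `G_Π` has maximum degree at most `d` and at most `n > c₀` vertices, every
graph `H` of maximum degree at most `3` with
`|V(H)| ≤ w²·α²/(2¹⁹·d⁴·n·log₂ n)` is a minor of `G_Π`. -/
theorem embed_into_path_of_expanders :
    ∃ c₀ : ℝ, 0 < c₀ ∧
      ∀ (V : Type) [Fintype V] (w d n : ℕ) (α : ℝ),
        0 < α → α < 1 → 0 < w →
        ∀ P : PathOfExpanders V w α,
          DegLE P.graph d →
          Nat.card V ≤ n → c₀ < (n : ℝ) →
          ∀ (W : Type) [Fintype W] (H : SimpleGraph W),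
            DegLE H 3 →
            (Nat.card W : ℝ) ≤
              (w : ℝ) ^ 2 * α ^ 2 / (2 ^ 19 * (d : ℝ) ^ 4 * n * Real.logb 2 n) →
            IsMinor H P.graph := by
  refine ⟨2, two_pos, fun V _ w d n α hα hα1 _ P hd hVn hn W _ H hH hW => ?_⟩
  have hT := P.induce_T_isContained 0
  have hwT : (w : ℝ) ≤ Nat.card (P.TV 0) := by exact_mod_cast P.width_le_card_TV 0
  have hTn : (Nat.card (P.TV 0) : ℝ) ≤ n := by
    exact_mod_cast (Finite.card_subtype_le _).trans hVn
  have hlog : 0 < Real.logb 2 n := Real.logb_pos one_lt_two (by linarith)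
  refine embed_into_path_of_expanders_general (P.T_exp 0) hT (hd.of_isContained hT) hH hα hα1.le
    hn.le hTn (hW.trans ?_)
  exact_mod_cast width_bound_le_expander_bound (Nat.cast_nonneg w) (hwT.trans hTn) hwT (by linarith)
    hlog d α
end
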